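/- arXiv:2207.08039 — 2 statements merged into one kernel-verified Lean document; each statement's English description precedes it below -/
import Mathlib

section
/- Let n ≥ 2, 1 ≤ s < ∞, let Ω ⊆ ℝⁿ be a bounded domain, and let 𝒯 be a family of essential tubes for Ω, the tube T ∈ 𝒯 having parameters r_T, l_T, c_T, such that the corresponding components Ω_T are pairwise disjoint. If Σ_{T∈𝒯} c_T · (r_T)ⁿ · (l_T/r_T)^{s+1} = ∞, then for every point z₀ ∈ Ω one has ∫_Ω k(z, z₀; Ω)^s dz = ∞. -/
open MeasureTheory Metric Set
open scoped ENNReal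

/-- The quasihyperbolic distance `k(z, z₀; Ω)`: the infimum, over all Lipschitz curves
`γ : [0,1] → Ω` joining `z` to `z₀`, of `∫ ‖γ'(t)‖ / d(γ(t), ∂Ω) dt`. -/
noncomputable def qhDist {n : ℕ} (Ω : Set (EuclideanSpace ℝ (Fin n)))
    (z z₀ : EuclideanSpace ℝ (Fin n)) : ℝ :=
  sInf {L : ℝ | ∃ γ : ℝ → EuclideanSpace ℝ (Fin n),
    (∃ K : NNReal, LipschitzWith K γ) ∧ γ 0 = z ∧ γ 1 = z₀ ∧
    (∀ t ∈ Set.Icc (0:ℝ) 1, γ t ∈ Ω) ∧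
    L = ∫ t in (0:ℝ)..1, ‖deriv γ t‖ / Metric.infDist (γ t) (frontier Ω)}

/-- The distance of `z` from the first coordinate axis. -/
noncomputable def radial {n : ℕ} [NeZero n] (z : EuclideanSpace ℝ (Fin n)) : ℝ :=
  Real.sqrt (∑ i ∈ Finset.univ.erase (0 : Fin n), z i ^ 2)

/-- The standard cylinder `[0, l] × D_r^{n-1}` in `ℝⁿ`, the first coordinate being the axis. -/
def stdCylinder {n : ℕ} [NeZero n] (l r : ℝ) : Set (EuclideanSpace ℝ (Fin n)) :=
  {z | z 0 ∈ Set.Icc (0:ℝ) l ∧ radial z ≤ r}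

/-- The wall `[0, l] × ∂D_r^{n-1}` of the standard cylinder. -/
def stdWall {n : ℕ} [NeZero n] (l r : ℝ) : Set (EuclideanSpace ℝ (Fin n)) :=
  {z | z 0 ∈ Set.Icc (0:ℝ) l ∧ radial z = r}

/-- The `t`-th slice `{t} × D_r^{n-1}` of the standard cylinder. -/
def stdSlice {n : ℕ} [NeZero n] (r t : ℝ) : Set (EuclideanSpace ℝ (Fin n)) :=
  {z | z 0 = t ∧ radial z ≤ r}

/-- `T = φ '' stdCylinder l r` is an essential tube for `Ω` with parameters `l, r, c` and
corresponding component `ΩT`: `ΩT` is a connected component of `T ∩ Ω` missing the wall of `T`,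
and each slice of `ΩT` has `(n-1)`-dimensional (Hausdorff) measure at least `c` times that of
the corresponding slice of the tube (an isometric copy of `D_r^{n-1}`). -/
structure IsEssentialTube {n : ℕ} [NeZero n] (Ω : Set (EuclideanSpace ℝ (Fin n)))
    (φ : EuclideanSpace ℝ (Fin n) ≃ᵢ EuclideanSpace ℝ (Fin n))
    (l r c : ℝ) (ΩT : Set (EuclideanSpace ℝ (Fin n))) : Prop where
  l_pos : 0 < l
  r_pos : 0 < r
  c_pos : 0 < c
  isComp : ∃ p ∈ (φ '' stdCylinder l r) ∩ Ω,
    ΩT = connectedComponentIn ((φ '' stdCylinder l r) ∩ Ω) p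
  wall_disjoint : ΩT ∩ (φ '' stdWall l r) = ∅
  slice_meas : ∀ t ∈ Set.Icc (0:ℝ) l,
    ENNReal.ofReal c * μH[(n:ℝ) - 1] (φ '' stdSlice r t) ≤
      μH[(n:ℝ) - 1] (ΩT ∩ φ '' stdSlice r t)


theorem lip_path_exists {E : Type*} [NormedAddCommGroup E] [NormedSpace ℝ E] {Ω : Set E}
    (hop : IsOpen Ω) (hc : IsPreconnected Ω) {x y : E} (hx : x ∈ Ω) (hy : y ∈ Ω) :
    ∃ γ : ℝ → E, (∃ K : NNReal, LipschitzWith K γ) ∧ γ 0 = x ∧ γ 1 = y ∧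
      ∀ t ∈ Set.Icc (0:ℝ) 1, γ t ∈ Ω := by
  have hclamp : ∀ a b : ℝ, ∃ K : NNReal,
      LipschitzWith K (fun t : ℝ => max 0 (min 1 (a * t + b))) := by
    intro a b
    refine ⟨‖a‖₊, ?_⟩
    have h1 : LipschitzWith ‖a‖₊ (fun t : ℝ => a * t + b) := by
      refine LipschitzWith.of_dist_le_mul fun s t => ?_
      simp only [Real.dist_eq, coe_nnnorm, Real.norm_eq_abs]
      rw [← abs_mul]
      apply le_of_eq
      congr 1
      ring
    exact (h1.const_min 1).const_max 0
  refine hc.induction₂ (fun x y => ∃ γ : ℝ → E, (∃ K : NNReal, LipschitzWith K γ) ∧ γ 0 = x ∧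
    γ 1 = y ∧ ∀ t ∈ Set.Icc (0:ℝ) 1, γ t ∈ Ω) ?_ ?_ ?_ hx hy
  · intro x hx
    obtain ⟨ε, hε, hb⟩ := Metric.isOpen_iff.1 hop x hx
    filter_upwards [mem_nhdsWithin_of_mem_nhds (Metric.ball_mem_nhds x hε)] with y hy
    refine ⟨fun t => AffineMap.lineMap x y t, ⟨_, lipschitzWith_lineMap x y⟩, by simp, by simp, ?_⟩
    intro t ht
    apply hb
    exact (convex_ball x ε).lineMap_mem (Metric.mem_ball_self hε) hy ht
  · rintro x y z hx hy hz ⟨γ₁, ⟨K₁, h₁⟩, h₁0, h₁1, h₁m⟩ ⟨γ₂, ⟨K₂, h₂⟩, h₂0, h₂1, h₂m⟩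
    obtain ⟨A, hA⟩ := hclamp 2 0
    obtain ⟨B, hB⟩ := hclamp 2 (-1)
    refine ⟨fun t => γ₁ (max 0 (min 1 (2 * t + 0))) + (γ₂ (max 0 (min 1 (2 * t + (-1)))) - y),
      ⟨_, (h₁.comp hA).add ((h₂.comp hB).sub (LipschitzWith.const y))⟩, ?_, ?_, ?_⟩
    · simp [h₁0, h₂0]
    · norm_num [h₁1, h₂1]
    · intro t ht
      rcases le_total t (1/2) with h | h
      · have e : max 0 (min 1 (2 * t + (-1))) = 0 := by
          apply max_eq_left
          exact (min_le_right _ _).trans (by linarith)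
        have e2 : (max 0 (min 1 (2 * t + 0))) ∈ Set.Icc (0:ℝ) 1 := 
          ⟨le_max_left _ _, max_le zero_le_one (min_le_left _ _)⟩
        simp only [e, h₂0, sub_self, add_zero]
        exact h₁m _ (by simpa using e2)
      · have e : max 0 (min 1 (2 * t + 0)) = 1 := by
          rw [min_eq_left (by linarith)]; simp
        have e2 : (max 0 (min 1 (2 * t + (-1)))) ∈ Set.Icc (0:ℝ) 1 := 
          ⟨le_max_left _ _, max_le zero_le_one (min_le_left _ _)⟩
        simp only [e, h₁1, add_sub_cancel]
        exact h₂m _ e2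
  · rintro x y hx hy ⟨γ₁, ⟨K₁, h₁⟩, h₁0, h₁1, h₁m⟩
    refine ⟨fun t => γ₁ (1 - t), ⟨_, h₁.comp ((LipschitzWith.const 1).sub LipschitzWith.id)⟩, 
      by simpa using h₁1, by simpa using h₁0, fun t ht => h₁m _ ⟨by linarith [ht.2], by linarith [ht.1]⟩⟩

/-- A scalar function that varies less than a Lipschitz curve is controlled by the weighted length. -/
theorem length_lower {E : Type*} [NormedAddCommGroup E] [NormedSpace ℝ E] [FiniteDimensional ℝ E]
    {γ : ℝ → E} {K : NNReal} (hγ : LipschitzWith K γ) {f : ℝ → ℝ}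
    (hf : ∀ s t, |f s - f t| ≤ ‖γ s - γ t‖) {w : ℝ → ℝ} {τ R : ℝ} (hτ : τ ∈ Set.Icc (0:ℝ) 1)
    (hR : 0 < R) (hw : ContinuousOn w (Set.Icc 0 1)) (hwpos : ∀ t ∈ Set.Icc (0:ℝ) 1, 0 < w t)
    (hwR : ∀ t ∈ Set.Icc (0:ℝ) τ, w t ≤ R) :
    |f τ - f 0| / R ≤ ∫ t in (0:ℝ)..1, ‖deriv γ t‖ / w t := by
  have hfl : LipschitzWith K f := by
    refine LipschitzWith.of_dist_le_mul fun s t => ?_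
    rw [Real.dist_eq]
    refine (hf s t).trans ?_
    rw [← dist_eq_norm]
    exact hγ.dist_le_mul s t
  have hac : AbsolutelyContinuousOnInterval f 0 τ := (hfl.lipschitzOnWith).absolutelyContinuousOnInterval
  have hderiv : ∀ᵐ t : ℝ, |deriv f t| ≤ ‖deriv γ t‖ := by
    filter_upwards [hγ.ae_differentiableAt (μ := volume), hfl.ae_differentiableAt (μ := volume)] with t h1 h2
    have e1 := (hasDerivAt_iff_tendsto_slope.1 h1.hasDerivAt).norm
    have e2 := (hasDerivAt_iff_tendsto_slope.1 h2.hasDerivAt).norm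
    refine le_of_tendsto_of_tendsto e2 e1 (Filter.Eventually.of_forall fun u => ?_)
    simp only [slope, vsub_eq_sub, norm_smul]
    gcongr
    exact hf u t
  have hint : IntervalIntegrable (fun t => ‖deriv γ t‖ / w t) volume 0 1 := by
    have hw' : ContinuousOn (fun t => (w t)⁻¹) (Set.uIcc 0 1) := by
      rw [Set.uIcc_of_le zero_le_one]
      exact hw.inv₀ fun t ht => (hwpos t ht).ne'
    have hd : IntervalIntegrable (fun t => ‖deriv γ t‖) volume 0 1 := by
      have : IntervalIntegrable (fun _ : ℝ => (K:ℝ)) volume 0 1 := intervalIntegrable_const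
      refine this.mono_fun ((stronglyMeasurable_deriv γ).norm.aestronglyMeasurable) ?_
      refine Filter.Eventually.of_forall fun t => ?_
      simpa using norm_deriv_le_of_lipschitz hγ
    simpa [div_eq_mul_inv] using hd.mul_continuousOn hw'
  have hint1 : IntervalIntegrable (fun t => ‖deriv γ t‖ / w t) volume 0 τ :=
    hint.mono_set (by rw [Set.uIcc_of_le hτ.1, Set.uIcc_of_le zero_le_one]; exact Set.Icc_subset_Icc_right hτ.2)
  calc |f τ - f 0| / R = |∫ t in (0:ℝ)..τ, deriv f t| / R := by rw [hac.integral_deriv_eq_sub]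
    _ ≤ (∫ t in (0:ℝ)..τ, |deriv f t|) / R := by
        gcongr
        exact intervalIntegral.abs_integral_le_integral_abs hτ.1
    _ = ∫ t in (0:ℝ)..τ, |deriv f t| / R := by rw [intervalIntegral.integral_div]
    _ ≤ ∫ t in (0:ℝ)..τ, ‖deriv γ t‖ / w t := by
        refine intervalIntegral.integral_mono_ae_restrict hτ.1
          (hac.intervalIntegrable_deriv.abs.div_const R) hint1 ?_
        filter_upwards [ae_restrict_of_ae hderiv, ae_restrict_mem measurableSet_Icc] with t h1 h2
        have := hwpos t ⟨h2.1, h2.2.trans hτ.2⟩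
        have := hwR t h2
        gcongr
    _ ≤ ∫ t in (0:ℝ)..1, ‖deriv γ t‖ / w t := by
        refine intervalIntegral.integral_mono_interval le_rfl hτ.1 hτ.2 ?_ hint
        refine (ae_restrict_mem measurableSet_Ioc).mono fun t ht => ?_
        exact div_nonneg (norm_nonneg _) (hwpos t ⟨ht.1.le, ht.2⟩).le

section tubes

variable {n : ℕ} [NeZero n]

theorem continuous_radial : Continuous (radial : EuclideanSpace ℝ (Fin n) → ℝ) := by
  unfold radial
  fun_prop

theorem isClosed_stdCylinder (l r : ℝ) :
    IsClosed (stdCylinder l r : Set (EuclideanSpace ℝ (Fin n))) := by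
  have h0 : Continuous fun z : EuclideanSpace ℝ (Fin n) => z 0 := by fun_prop
  exact (isClosed_Icc.preimage h0).inter (isClosed_Iic.preimage continuous_radial)

variable {Ω : Set (EuclideanSpace ℝ (Fin n))}
    {φ : EuclideanSpace ℝ (Fin n) ≃ᵢ EuclideanSpace ℝ (Fin n)}
    {l r c : ℝ} {ΩT : Set (EuclideanSpace ℝ (Fin n))}

theorem tube_subset (hT : IsEssentialTube Ω φ l r c ΩT) : ΩT ⊆ (φ '' stdCylinder l r) ∩ Ω := by
  obtain ⟨p, hp, rfl⟩ := hT.isComp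
  exact connectedComponentIn_subset _ _

theorem tube_max (hT : IsEssentialTube Ω φ l r c ΩT) {s : Set (EuclideanSpace ℝ (Fin n))}
    (hs : IsPreconnected s) (hsub : s ⊆ (φ '' stdCylinder l r) ∩ Ω) (hne : (s ∩ ΩT).Nonempty) :
    s ⊆ ΩT := by
  obtain ⟨p, hp, rfl⟩ := hT.isComp
  obtain ⟨x, hx, hx'⟩ := hne
  rw [connectedComponentIn_eq hx']
  exact hs.subset_connectedComponentIn hx hsub

theorem tube_measurable (hop : IsOpen Ω) (hT : IsEssentialTube Ω φ l r c ΩT) :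
    MeasurableSet ΩT := by
  have hcl : IsClosed (φ '' stdCylinder l r) :=
    φ.toHomeomorph.isClosedMap _ (isClosed_stdCylinder l r)
  have h : ΩT = closure ΩT ∩ ((φ '' stdCylinder l r) ∩ Ω) := by
    apply Subset.antisymm
    · exact subset_inter subset_closure (tube_subset hT)
    · have hpre : IsPreconnected ΩT := by
        obtain ⟨p, hp, rfl⟩ := hT.isComp
        exact isPreconnected_connectedComponentIn
      have hne : ΩT.Nonempty := by
        obtain ⟨p, hp, rfl⟩ := hT.isComp
        exact ⟨p, mem_connectedComponentIn hp⟩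
      have hsub : ΩT ⊆ closure ΩT ∩ ((φ '' stdCylinder l r) ∩ Ω) :=
        subset_inter subset_closure (tube_subset hT)
      refine tube_max hT (hpre.subset_closure hsub inter_subset_left) inter_subset_right ?_
      obtain ⟨x, hx⟩ := hne
      exact ⟨x, hsub hx, hx⟩
  rw [h]
  exact isClosed_closure.measurableSet.inter (hcl.measurableSet.inter hop.measurableSet)

/-- A path in `Ω` starting in the component stays there as long as it does not leave
through the ends of the tube. -/
theorem tube_path (hT : IsEssentialTube Ω φ l r c ΩT) {η : ℝ → EuclideanSpace ℝ (Fin n)} {b : ℝ}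
    (hb : 0 ≤ b) (hη : Continuous η) (hΩ : ∀ t ∈ Icc 0 b, η t ∈ Ω) (h0 : η 0 ∈ ΩT)
    (hf : ∀ t ∈ Icc 0 b, (φ.symm (η t)) 0 ∈ Icc 0 l) : ∀ t ∈ Icc 0 b, η t ∈ ΩT := by
  have hρ : Continuous fun t => radial (φ.symm (η t)) :=
    continuous_radial.comp (φ.symm.continuous.comp hη)
  have key : ∀ σ ∈ Icc 0 b, (∀ t ∈ Icc 0 σ, radial (φ.symm (η t)) ≤ r) →
      ∀ t ∈ Icc 0 σ, η t ∈ ΩT := by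
    intro σ hσ h
    have := tube_max hT (s := η '' Icc 0 σ) (isPreconnected_Icc.image _ hη.continuousOn) ?_
      ⟨η 0, ⟨0, ⟨le_rfl, hσ.1⟩, rfl⟩, h0⟩
    · exact fun t ht => this ⟨t, ht, rfl⟩
    · rintro _ ⟨t, ht, rfl⟩
      have ht' : t ∈ Icc 0 b := ⟨ht.1, ht.2.trans hσ.2⟩
      exact ⟨⟨φ.symm (η t), ⟨hf t ht', h t ht⟩, by simp⟩, hΩ t ht'⟩
  have hlt : ∀ t ∈ Icc 0 b, radial (φ.symm (η t)) < r := by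
    by_contra! hcon
    obtain ⟨t₁, ht₁, hr₁⟩ := hcon
    have hcomp : IsCompact (Icc 0 b ∩ {t | r ≤ radial (φ.symm (η t))}) :=
      isCompact_Icc.inter_right (isClosed_le continuous_const hρ)
    obtain ⟨σ, ⟨hσ, hσr⟩, hmin⟩ := hcomp.exists_isLeast ⟨t₁, ht₁, hr₁⟩
    have h0r : radial (φ.symm (η 0)) ≤ r := by
      obtain ⟨⟨x, hx, hxe⟩, -⟩ := tube_subset hT h0
      rw [← hxe]; simpa using hx.2
    obtain ⟨u, hu, hur⟩ : r ∈ (fun t => radial (φ.symm (η t))) '' Icc 0 σ :=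
      intermediate_value_Icc hσ.1 hρ.continuousOn ⟨h0r, hσr⟩
    have hu' : u ∈ Icc 0 b := ⟨hu.1, hu.2.trans hσ.2⟩
    have hmem := key u hu' (fun t ht => by
      by_contra! hgt
      have h1 := hmin ⟨⟨ht.1, ht.2.trans hu'.2⟩, hgt.le⟩
      have : t = u := le_antisymm ht.2 (hu.2.trans h1)
      subst this
      exact absurd hur hgt.ne') u ⟨hu.1, le_rfl⟩
    have : η u ∈ ΩT ∩ (φ '' stdWall l r) := ⟨hmem, φ.symm (η u), ⟨hf u hu', hur⟩, by simp⟩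
    rw [hT.wall_disjoint] at this
    exact this
  exact key b ⟨hb, le_rfl⟩ fun t ht => (hlt t ht).le

theorem tube_infDist (hn : 2 ≤ n) (hop : IsOpen Ω) (hT : IsEssentialTube Ω φ l r c ΩT)
    {w : EuclideanSpace ℝ (Fin n)} (hw : w ∈ ΩT) : Metric.infDist w (frontier Ω) ≤ 2 * r := by
  by_contra! hlt
  have hball : Metric.ball w (Metric.infDist w (frontier Ω)) ⊆ Ω := by
    refine (convex_ball _ _).isPreconnected.subset_left_of_subset_union hop
      (isClosed_closure (s := Ω)).isOpen_compl ?_ ?_ ⟨w, ?_, (tube_subset hT hw).2⟩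
    · exact disjoint_compl_right_iff_subset.2 subset_closure
    · intro x hx
      by_cases h : x ∈ Ω
      · exact Or.inl h
      · right
        intro hx'
        have : x ∈ frontier Ω := by rw [hop.frontier_eq]; exact ⟨hx', h⟩
        have := Metric.infDist_le_dist_of_mem (x := w) this
        rw [Metric.mem_ball, dist_comm] at hx
        linarith
    · exact Metric.mem_ball_self (by linarith [hT.r_pos])
  have hr := hT.r_pos
  let e : EuclideanSpace ℝ (Fin n) := EuclideanSpace.single ⟨1, hn⟩ 1
  have h10 : (⟨1, hn⟩ : Fin n) ≠ 0 := by
    intro h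
    have := congrArg Fin.val h
    simp at this
  obtain ⟨⟨x, hx, hxw⟩, -⟩ := tube_subset hT hw
  let η : ℝ → EuclideanSpace ℝ (Fin n) := fun t => φ (x + t • e)
  have hη : Continuous η := φ.continuous.comp (by fun_prop)
  have := tube_path hT (η := η) (b := 2 * r) (by linarith) hη ?_ ?_ ?_ (2*r) ⟨by linarith, le_rfl⟩
  · obtain ⟨⟨y, hy, hye⟩, -⟩ := tube_subset hT this
    have hy' : y = x + (2 * r) • e := φ.injective hye
    have hcoord : ∀ z : EuclideanSpace ℝ (Fin n), |z ⟨1, hn⟩| ≤ radial z := by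
      intro z
      unfold radial
      rw [← Real.sqrt_sq_eq_abs]
      apply Real.sqrt_le_sqrt
      exact Finset.single_le_sum (f := fun i => z i ^ 2) (fun i _ => sq_nonneg _)
        (Finset.mem_erase.2 ⟨h10, Finset.mem_univ _⟩)
    have h1 := (hcoord x).trans hx.2
    have h2 := (hcoord y).trans hy.2
    have h3 : y ⟨1, hn⟩ = x ⟨1, hn⟩ + 2 * r := by simp [hy', e]
    rw [h3] at h2
    -- `|x₁| ≤ r` and `|x₁ + 2r| ≤ r`, so `x₁ = -r`, and `x` lies on the wall
    have h4 : x ⟨1, hn⟩ = -r := by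
      have := (abs_le.1 h1).1
      have := (abs_le.1 h2).2
      linarith
    have h5 : radial x = r := by
      apply le_antisymm hx.2
      have := hcoord x
      rwa [h4, abs_neg, abs_of_pos hr] at this
    have : w ∈ ΩT ∩ (φ '' stdWall l r) := ⟨hw, x, ⟨hx.1, h5⟩, hxw⟩
    rw [hT.wall_disjoint] at this
    exact this
  · intro t ht
    apply hball
    rw [Metric.mem_ball, ← hxw, φ.dist_eq]
    simp only [dist_self_add_left, norm_smul, e, hxw]
    simp only [EuclideanSpace.norm_single, norm_one, mul_one, Real.norm_eq_abs, abs_of_nonneg ht.1]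
    linarith [ht.2]
  · simpa [η, hxw] using hw
  · intro t ht
    simp only [η, IsometryEquiv.symm_apply_apply]
    simpa [e, Ne.symm h10] using hx.1

theorem qhDist_nonneg (Ω : Set (EuclideanSpace ℝ (Fin n))) (z z₀ : EuclideanSpace ℝ (Fin n)) :
    0 ≤ qhDist Ω z z₀ := by
  apply Real.sInf_nonneg
  rintro L ⟨γ, -, -, -, -, rfl⟩
  exact intervalIntegral.integral_nonneg zero_le_one fun t _ =>
    div_nonneg (norm_nonneg _) Metric.infDist_nonneg

theorem qhDist_lower (hn : 2 ≤ n) (hop : IsOpen Ω) (hconn : IsConnected Ω)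
    (hbd : Bornology.IsBounded Ω) (hT : IsEssentialTube Ω φ l r c ΩT)
    {z z₀ : EuclideanSpace ℝ (Fin n)} (hz : z ∈ ΩT) (hz₀ : z₀ ∈ Ω) (hz₀' : z₀ ∉ ΩT) {m : ℝ}
    (h1 : m ≤ (φ.symm z) 0) (h2 : m ≤ l - (φ.symm z) 0) :
    m / (2 * r) ≤ qhDist Ω z z₀ := by
  have hr := hT.r_pos
  have hzΩ := (tube_subset hT hz).2
  have hfne : (frontier Ω).Nonempty := by
    rw [nonempty_frontier_iff]
    refine ⟨⟨z, hzΩ⟩, ?_⟩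
    rintro rfl
    have : Nontrivial (EuclideanSpace ℝ (Fin n)) := by
      have : Nonempty (Fin n) := ⟨0⟩
      infer_instance
    exact NormedSpace.unbounded_univ ℝ (EuclideanSpace ℝ (Fin n)) hbd
  unfold qhDist
  apply le_csInf
  · obtain ⟨γ, hγ⟩ := lip_path_exists hop hconn.isPreconnected hzΩ hz₀
    exact ⟨_, γ, hγ.1, hγ.2.1, hγ.2.2.1, hγ.2.2.2, rfl⟩
  rintro L ⟨γ, ⟨K, hK⟩, h0, h1', hΩ, rfl⟩
  let f : ℝ → ℝ := fun t => (φ.symm (γ t)) 0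
  have hfc : Continuous f := by
    have : Continuous fun z : EuclideanSpace ℝ (Fin n) => z 0 := by fun_prop
    exact this.comp (φ.symm.continuous.comp hK.continuous)
  have hf : ∀ s t, |f s - f t| ≤ ‖γ s - γ t‖ := by
    intro s t
    rw [← dist_eq_norm, ← φ.symm.dist_eq, dist_eq_norm]
    exact PiLp.norm_apply_le (φ.symm (γ s) - φ.symm (γ t)) 0
  have hfz : f 0 = (φ.symm z) 0 := by simp [f, h0]
  have hw : Continuous fun t => Metric.infDist (γ t) (frontier Ω) :=
    (Metric.continuous_infDist_pt _).comp hK.continuous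
  have hwpos : ∀ t ∈ Icc (0:ℝ) 1, 0 < Metric.infDist (γ t) (frontier Ω) := by
    intro t ht
    refine (isClosed_frontier.notMem_iff_infDist_pos hfne).1 ?_
    rw [hop.frontier_eq]
    exact fun h => h.2 (hΩ t ht)
  have stay : ∀ b ∈ Icc (0:ℝ) 1, (∀ t ∈ Icc 0 b, |f t - f 0| ≤ m) → ∀ t ∈ Icc 0 b, γ t ∈ ΩT := by
    intro b hb h
    refine tube_path hT hb.1 hK.continuous (fun t ht => hΩ t ⟨ht.1, ht.2.trans hb.2⟩)
      (by rwa [h0]) ?_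
    intro t ht
    have := abs_le.1 (h t ht)
    rw [hfz] at this
    exact ⟨by change 0 ≤ f t; linarith, by change f t ≤ l; linarith⟩
  obtain ⟨τ, hτ, hτm, hτle⟩ : ∃ τ ∈ Icc (0:ℝ) 1, m ≤ |f τ - f 0| ∧
      ∀ t ∈ Icc 0 τ, γ t ∈ ΩT := by
    by_cases hm : m ≤ 0
    · refine ⟨0, by simp, by simpa using hm, ?_⟩
      intro t ht
      have : t = 0 := le_antisymm ht.2 ht.1
      rw [this, h0]; exact hz
    push Not at hm
    have hex : ∃ t ∈ Icc (0:ℝ) 1, m ≤ |f t - f 0| := by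
      by_contra! hcon
      apply hz₀'
      rw [← h1']
      exact stay 1 (by simp) (fun t ht => (hcon t ht).le) 1 (by simp)
    obtain ⟨t₁, ht₁, hm₁⟩ := hex
    have hg : Continuous fun t => |f t - f 0| := by fun_prop
    have hcomp : IsCompact (Icc 0 1 ∩ {t | m ≤ |f t - f 0|}) :=
      isCompact_Icc.inter_right (isClosed_le continuous_const hg)
    obtain ⟨σ, ⟨hσ, hσr⟩, hmin⟩ := hcomp.exists_isLeast ⟨t₁, ht₁, hm₁⟩
    obtain ⟨u, hu, hur⟩ : m ∈ (fun t => |f t - f 0|) '' Icc 0 σ :=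
      intermediate_value_Icc hσ.1 hg.continuousOn ⟨by simpa using hm.le, hσr⟩
    have hu' : u ∈ Icc (0:ℝ) 1 := ⟨hu.1, hu.2.trans hσ.2⟩
    refine ⟨u, hu', hur.ge, stay u hu' fun t ht => ?_⟩
    by_contra! hgt
    have h1 := hmin ⟨⟨ht.1, ht.2.trans hu'.2⟩, hgt.le⟩
    have : t = u := le_antisymm ht.2 (hu.2.trans h1)
    subst this
    exact absurd hur hgt.ne'
  refine le_trans ?_ (length_lower hK hf hτ (R := 2 * r) (by linarith) hw.continuousOn hwpos
    fun t ht => tube_infDist hn hop hT (hτle t ht))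
  gcongr

end tubes

section measure

/-- The isometric embedding of `ℝᵐ` as the hyperplane `x₀ = t` of `ℝᵐ⁺¹`. -/
def sliceEmb (m : ℕ) (t : ℝ) (y : EuclideanSpace ℝ (Fin m)) : EuclideanSpace ℝ (Fin (m+1)) :=
  WithLp.toLp 2 (Fin.cons t (WithLp.ofLp y) : Fin (m+1) → ℝ)

theorem sliceEmb_isometry (m : ℕ) (t : ℝ) : Isometry (sliceEmb m t) := by
  refine Isometry.of_dist_eq fun x y => ?_
  simp [EuclideanSpace.dist_eq, sliceEmb, Fin.sum_univ_succ]

theorem sliceEmb_zero (m : ℕ) (t : ℝ) (y : EuclideanSpace ℝ (Fin m)) : sliceEmb m t y 0 = t := by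
  simp [sliceEmb]

theorem sliceEmb_radial (m : ℕ) (t : ℝ) (y : EuclideanSpace ℝ (Fin m)) :
    radial (sliceEmb m t y) = ‖y‖ := by
  have h : ∀ z : EuclideanSpace ℝ (Fin (m+1)),
      ∑ i ∈ Finset.univ.erase (0 : Fin (m+1)), z i ^ 2 = ∑ i : Fin m, z i.succ ^ 2 := by
    intro z
    have h1 := Finset.add_sum_erase Finset.univ (fun i => z i ^ 2) (Finset.mem_univ (0 : Fin (m+1)))
    rw [Fin.sum_univ_succ] at h1
    exact add_left_cancel h1
  unfold radial
  rw [h, EuclideanSpace.norm_eq]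
  simp [sliceEmb]

theorem sliceEmb_image (m : ℕ) (t r : ℝ) :
    (stdSlice r t : Set (EuclideanSpace ℝ (Fin (m+1)))) = sliceEmb m t '' closedBall 0 r := by
  ext z
  constructor
  · rintro ⟨h0, hr⟩
    have hz : sliceEmb m t (WithLp.toLp 2 (fun i : Fin m => z i.succ)) = z := by
      ext i
      refine Fin.cases ?_ (fun i => ?_) i
      · simp [sliceEmb, h0]
      · simp [sliceEmb]
    refine ⟨_, ?_, hz⟩
    rw [mem_closedBall_zero_iff, ← sliceEmb_radial m t, hz]
    exact hr
  · rintro ⟨y, hy, rfl⟩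
    refine ⟨sliceEmb_zero m t y, ?_⟩
    rw [sliceEmb_radial]
    simpa using hy

theorem sliceEmb_preserving (m : ℕ) :
    MeasurePreserving (fun p : ℝ × EuclideanSpace ℝ (Fin m) => sliceEmb m p.1 p.2) := by
  have h1 := (volume_preserving_piFinSuccAbove (fun _ : Fin (m+1) => ℝ) 0).symm
  have h2 : MeasurePreserving (Prod.map (id : ℝ → ℝ)
      (WithLp.ofLp : EuclideanSpace ℝ (Fin m) → (Fin m → ℝ))) :=
    (MeasurePreserving.id volume).prod (PiLp.volume_preserving_ofLp (Fin m))
  have h3 := ((PiLp.volume_preserving_toLp (Fin (m+1))).comp h1).comp h2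
  convert h3 using 2 with p
  ext p
  simp [sliceEmb, MeasurableEquiv.piFinSuccAbove, Fin.insertNthEquiv]

theorem volume_slices (m : ℕ) {A : Set (EuclideanSpace ℝ (Fin (m+1)))} (hA : MeasurableSet A) :
    volume A = ∫⁻ t : ℝ, volume (sliceEmb m t ⁻¹' A) := by
  rw [← (sliceEmb_preserving m).measure_preimage hA.nullMeasurableSet, Measure.volume_eq_prod,
    Measure.prod_apply ((sliceEmb_preserving m).measurable hA)]
  rfl

theorem isometryEquiv_volume {m : ℕ} 
    (φ : EuclideanSpace ℝ (Fin m) ≃ᵢ EuclideanSpace ℝ (Fin m)) (A : Set (EuclideanSpace ℝ (Fin m))) :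
    volume (φ ⁻¹' A) = volume A := by
  rw [← EuclideanSpace.euclideanHausdorffMeasure_eq_volume,
    ← φ.isometry.euclideanHausdorffMeasure_image, image_preimage_eq _ φ.surjective]

theorem tube_volume {m : ℕ} {Ω : Set (EuclideanSpace ℝ (Fin (m+1)))} (hop : IsOpen Ω)
    {φ : EuclideanSpace ℝ (Fin (m+1)) ≃ᵢ EuclideanSpace ℝ (Fin (m+1))}
    {l r c : ℝ} {ΩT : Set (EuclideanSpace ℝ (Fin (m+1)))} (hT : IsEssentialTube Ω φ l r c ΩT)
    {a b : ℝ} (ha : 0 ≤ a) (hb : b ≤ l) :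
    ENNReal.ofReal (b - a) * (ENNReal.ofReal c *
      volume (closedBall (0 : EuclideanSpace ℝ (Fin m)) r)) ≤
      volume (ΩT ∩ {z | (φ.symm z) 0 ∈ Icc a b}) := by
  have hmeas : MeasurableSet (ΩT ∩ {z | (φ.symm z) 0 ∈ Icc a b}) := by
    refine (tube_measurable hop hT).inter ?_
    have h0 : Continuous fun z : EuclideanSpace ℝ (Fin (m+1)) => (φ.symm z) 0 := by
      have : Continuous fun z : EuclideanSpace ℝ (Fin (m+1)) => z 0 := by fun_prop
      exact this.comp φ.symm.continuous
    exact (isClosed_Icc.preimage h0).measurableSet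
  rw [← isometryEquiv_volume φ, volume_slices m (φ.continuous.measurable hmeas)]
  have hslice : ∀ t ∈ Icc a b, ENNReal.ofReal c *
      volume (closedBall (0 : EuclideanSpace ℝ (Fin m)) r) ≤
      volume (sliceEmb m t ⁻¹' (φ ⁻¹' (ΩT ∩ {z | (φ.symm z) 0 ∈ Icc a b}))) := by
    intro t ht
    have hiso : Isometry (φ ∘ sliceEmb m t) := φ.isometry.comp (sliceEmb_isometry m t)
    have h1 := hT.slice_meas t ⟨ha.trans ht.1, ht.2.trans hb⟩
    have hcast : (((m+1 : ℕ) : ℝ) - 1) = (m : ℝ) := by push_cast; ring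
    rw [hcast, sliceEmb_image, ← image_comp] at h1
    have h2 : ENNReal.ofReal c * μHE[m] ((φ ∘ sliceEmb m t) '' closedBall 0 r) ≤
        μHE[m] (ΩT ∩ (φ ∘ sliceEmb m t) '' closedBall 0 r) := by
      simp only [Measure.euclideanHausdorffMeasure_def, Measure.smul_apply, ENNReal.smul_def,
        smul_eq_mul]
      rw [mul_left_comm]
      gcongr
    rw [inter_comm, ← image_inter_preimage, hiso.euclideanHausdorffMeasure_image,
      hiso.euclideanHausdorffMeasure_image, EuclideanSpace.euclideanHausdorffMeasure_eq_volume] at h2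
    refine h2.trans (measure_mono ?_)
    rintro y ⟨-, hy⟩
    refine ⟨hy, ?_⟩
    simpa [sliceEmb_zero] using ht
  calc _ = ∫⁻ t in Icc a b, ENNReal.ofReal c *
      volume (closedBall (0 : EuclideanSpace ℝ (Fin m)) r) := by
        rw [setLIntegral_const, Real.volume_Icc, mul_comm]
    _ ≤ ∫⁻ t in Icc a b, volume (sliceEmb m t ⁻¹' (φ ⁻¹' (ΩT ∩ {z | (φ.symm z) 0 ∈ Icc a b}))) :=
        setLIntegral_mono' measurableSet_Icc hslice
    _ ≤ _ := setLIntegral_le_lintegral _ _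

end measure

theorem tube_integral {m : ℕ} (hn : 2 ≤ m + 1) {s : ℝ} (hs : 1 ≤ s)
    {Ω : Set (EuclideanSpace ℝ (Fin (m+1)))} (hop : IsOpen Ω) (hconn : IsConnected Ω)
    (hbd : Bornology.IsBounded Ω)
    {φ : EuclideanSpace ℝ (Fin (m+1)) ≃ᵢ EuclideanSpace ℝ (Fin (m+1))}
    {l r c : ℝ} {ΩT : Set (EuclideanSpace ℝ (Fin (m+1)))} (hT : IsEssentialTube Ω φ l r c ΩT)
    {z₀ : EuclideanSpace ℝ (Fin (m+1))} (hz₀ : z₀ ∈ Ω) (hz₀' : z₀ ∉ ΩT) :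
    (ENNReal.ofReal ((1/8) ^ s / 2) * volume (ball (0 : EuclideanSpace ℝ (Fin m)) 1)) *
      ENNReal.ofReal (c * r ^ (m+1) * (l / r) ^ (s+1)) ≤
      ∫⁻ z in ΩT, ENNReal.ofReal (qhDist Ω z z₀ ^ s) := by
  have hr := hT.r_pos
  have hl := hT.l_pos
  have hc := hT.c_pos
  set S := {z : EuclideanSpace ℝ (Fin (m+1)) | (φ.symm z) 0 ∈ Icc (l/4) (3*l/4)} with hS
  have hmeasS : MeasurableSet S := by
    have h0 : Continuous fun z : EuclideanSpace ℝ (Fin (m+1)) => (φ.symm z) 0 := by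
      have : Continuous fun z : EuclideanSpace ℝ (Fin (m+1)) => z 0 := by fun_prop
      exact this.comp φ.symm.continuous
    exact (isClosed_Icc.preimage h0).measurableSet
  have hv := tube_volume hop hT (a := l/4) (b := 3*l/4) (by linarith) (by linarith)
  rw [Measure.addHaar_closedBall _ _ hr.le, finrank_euclideanSpace_fin] at hv
  calc _ = ENNReal.ofReal (((l/4) / (2*r)) ^ s) * (ENNReal.ofReal (3*l/4 - l/4) * (ENNReal.ofReal c *
      (ENNReal.ofReal (r ^ m) * volume (ball (0 : EuclideanSpace ℝ (Fin m)) 1)))) := by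
        have e : (1/8 : ℝ) ^ s / 2 * (c * r ^ (m+1) * (l / r) ^ (s+1)) =
            ((l/4) / (2*r)) ^ s * ((3*l/4 - l/4) * (c * r ^ m)) := by
          have e1 : (l/4) / (2*r) = (1/8) * (l/r) := by field_simp; norm_num
          rw [e1, Real.mul_rpow (by norm_num) (by positivity), Real.rpow_add_one (by positivity)]
          field_simp
          ring
        rw [mul_right_comm, ← ENNReal.ofReal_mul (by positivity), e,
          ENNReal.ofReal_mul (by positivity), ENNReal.ofReal_mul (by linarith),
          ENNReal.ofReal_mul hc.le]
        ring
    _ ≤ ENNReal.ofReal (((l/4) / (2*r)) ^ s) * volume (ΩT ∩ S) := by gcongr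
    _ = ∫⁻ z in ΩT ∩ S, ENNReal.ofReal (((l/4) / (2*r)) ^ s) := by rw [setLIntegral_const]
    _ ≤ ∫⁻ z in ΩT ∩ S, ENNReal.ofReal (qhDist Ω z z₀ ^ s) := by
        refine setLIntegral_mono' ((tube_measurable hop hT).inter hmeasS) fun z hz => ?_
        apply ENNReal.ofReal_le_ofReal
        refine Real.rpow_le_rpow (by positivity) ?_ (by linarith)
        have h2 := hz.2
        rw [hS, mem_setOf_eq, mem_Icc] at h2
        exact qhDist_lower hn hop hconn hbd hT hz.1 hz₀ hz₀' h2.1 (by linarith [h2.2])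
    _ ≤ _ := lintegral_mono_set inter_subset_left

/-- If `Ω` has a family of essential tubes with pairwise disjoint
components and divergent sum `E_𝒯`, then the `L^s`-integral of the quasihyperbolic
distance is infinite for every base point. -/
theorem qh_integral_infinite_of_tubes {n : ℕ} [NeZero n] (hn : 2 ≤ n) (s : ℝ) (hs : 1 ≤ s)
    (Ω : Set (EuclideanSpace ℝ (Fin n))) (hΩop : IsOpen Ω) (hΩconn : IsConnected Ω)
    (hΩbd : Bornology.IsBounded Ω) {ι : Type*}
    (φ : ι → (EuclideanSpace ℝ (Fin n) ≃ᵢ EuclideanSpace ℝ (Fin n)))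
    (l r c : ι → ℝ) (ΩT : ι → Set (EuclideanSpace ℝ (Fin n)))
    (hT : ∀ i, IsEssentialTube Ω (φ i) (l i) (r i) (c i) (ΩT i))
    (hdisj : Pairwise (Function.onFun Disjoint ΩT))
    (hdiv : ∑' i, ENNReal.ofReal (c i * r i ^ n * (l i / r i) ^ (s+1)) = ⊤) :
    ∀ z₀ ∈ Ω, ∫⁻ z in Ω, ENNReal.ofReal (qhDist Ω z z₀ ^ s) = ⊤ := by
  obtain ⟨m, rfl⟩ : ∃ m, n = m + 1 := ⟨n - 1, by omega⟩
  intro z₀ hz₀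
  classical
  set C := ENNReal.ofReal ((1/8) ^ s / 2) * volume (ball (0 : EuclideanSpace ℝ (Fin m)) 1) with hC
  have hC0 : C ≠ 0 := by
    refine mul_ne_zero ?_ (measure_ball_pos _ _ one_pos).ne'
    rw [← pos_iff_ne_zero, ENNReal.ofReal_pos]
    positivity
  set a : ι → ENNReal := fun i => ENNReal.ofReal (c i * r i ^ (m+1) * (l i / r i) ^ (s+1)) with ha
  set b : ι → ENNReal := fun i => if z₀ ∈ ΩT i then 0 else a i with hb
  have hbtop : ∑' i, b i = ⊤ := by
    by_cases hex : ∃ i₀, z₀ ∈ ΩT i₀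
    · obtain ⟨i₀, hi₀⟩ := hex
      rw [ENNReal.tsum_eq_add_tsum_ite i₀] at hdiv
      have h1 : (∑' i, if i = i₀ then 0 else a i) = ⊤ := by
        rcases ENNReal.add_eq_top.1 hdiv with h | h
        · exact absurd h ENNReal.ofReal_ne_top
        · exact h
      rw [← h1]
      refine tsum_congr fun i => ?_
      by_cases hi : i = i₀
      · subst hi; simp [hb, hi₀]
      · have : z₀ ∉ ΩT i := fun h => Set.disjoint_left.1 (hdisj hi) h hi₀
        simp [hb, hi, this]
    · push Not at hex
      rw [← hdiv]
      exact tsum_congr fun i => by simp [hb, hex i, ha]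
  have hle : C * ∑' i, b i ≤ ∫⁻ z in Ω, ENNReal.ofReal (qhDist Ω z z₀ ^ s) := by
    rw [← ENNReal.tsum_mul_left, ENNReal.tsum_eq_iSup_sum]
    refine iSup_le fun F => ?_
    calc ∑ i ∈ F, C * b i ≤ ∑ i ∈ F, ∫⁻ z in ΩT i, ENNReal.ofReal (qhDist Ω z z₀ ^ s) := by
          refine Finset.sum_le_sum fun i _ => ?_
          by_cases hi : z₀ ∈ ΩT i
          · simp [hb, hi]
          · simp only [hb, hi, if_false]
            exact tube_integral hn hs hΩop hΩconn hΩbd (hT i) hz₀ hi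
      _ = ∫⁻ z in ⋃ i ∈ F, ΩT i, ENNReal.ofReal (qhDist Ω z z₀ ^ s) := by
          rw [lintegral_biUnion_finset (fun i _ j _ hij => hdisj hij)
            (fun i _ => tube_measurable hΩop (hT i))]
      _ ≤ _ := lintegral_mono_set (iUnion₂_subset fun i _ => (tube_subset (hT i)).trans
            inter_subset_right)
  rw [hbtop, ENNReal.mul_top hC0] at hle
  exact top_le_iff.1 hle
end

section
/- Let n ≥ 2, α ≥ 0, 1 ≤ s < ∞, and let Ω_α = {(x, y₁, …, y_{n−1}) ∈ ℝⁿ : 0 < x < 1, (y₁² + ⋯ + y_{n−1}²)^{1/2} < x^α}. Then Ω_α is an L^s-averaging domain if and only if (α − 1)(s − n + 1) < n. -/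
open MeasureTheory Metric Set
open scoped ENNReal

/-- The normalized `L^s`-mean oscillation integral `(1/|E|) ∫_E |u - u_E|^s dz`. -/
noncomputable def lsAvgE {n : ℕ} (s : ℝ) (u : EuclideanSpace ℝ (Fin n) → ℝ)
    (E : Set (EuclideanSpace ℝ (Fin n))) : ℝ≥0∞ :=
  (volume E)⁻¹ * ∫⁻ z in E, ENNReal.ofReal (|u z - (⨍ y in E, u y)| ^ s)

/-- `Ω` is an `L^s`-averaging domain: there is a finite constant `C` such that for every
locally integrable `u`, `((1/|Ω|) ∫_Ω |u - u_Ω|^s)^{1/s} ≤ C · sup_B ((1/|B|) ∫_B |u - u_B|^s)^{1/s}`,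
the supremum over all open balls `B ⊆ Ω`. -/
def IsLsAveragingDomain {n : ℕ} (s : ℝ) (Ω : Set (EuclideanSpace ℝ (Fin n))) : Prop :=
  ∃ C : ℝ≥0∞, C ≠ ⊤ ∧ ∀ u : EuclideanSpace ℝ (Fin n) → ℝ,
    MeasureTheory.LocallyIntegrableOn u Ω volume →
      (lsAvgE s u Ω) ^ (1/s) ≤
        C * ⨆ (x : EuclideanSpace ℝ (Fin n)) (ρ : ℝ) (_ : 0 < ρ ∧ ball x ρ ⊆ Ω),
          (lsAvgE s u (ball x ρ)) ^ (1/s)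

/-- The cusp domain `Ω_α = {0 < x < 1, |y| < x^α} ⊆ ℝⁿ`. -/
noncomputable def cuspDomain (n : ℕ) [NeZero n] (α : ℝ) : Set (EuclideanSpace ℝ (Fin n)) :=
  {z | 0 < z 0 ∧ z 0 < 1 ∧ radial z < (z 0) ^ α}


/-- normalized restriction of Lebesgue measure -/
noncomputable def nm {n : ℕ} (E : Set (EuclideanSpace ℝ (Fin n))) :
    Measure (EuclideanSpace ℝ (Fin n)) := (volume E)⁻¹ • volume.restrict E

lemma nm_prob {n : ℕ} {E : Set (EuclideanSpace ℝ (Fin n))} (h0 : volume E ≠ 0)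
    (ht : volume E ≠ ⊤) : IsProbabilityMeasure (nm E) := by
  constructor
  simp only [nm, Measure.smul_apply, Measure.restrict_apply_univ, smul_eq_mul]
  exact ENNReal.inv_mul_cancel h0 ht

lemma avg_eq_nm {n : ℕ} (E : Set (EuclideanSpace ℝ (Fin n)))
    (u : EuclideanSpace ℝ (Fin n) → ℝ) : (⨍ y in E, u y) = ∫ y, u y ∂(nm E) := by
  simp [average, nm]

lemma lintegral_nm {n : ℕ} (E : Set (EuclideanSpace ℝ (Fin n)))
    (f : EuclideanSpace ℝ (Fin n) → ℝ≥0∞) :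
    ∫⁻ z, f z ∂(nm E) = (volume E)⁻¹ * ∫⁻ z in E, f z := by
  simp [nm]

lemma ofReal_abs_rpow (s : ℝ) (hs : 1 ≤ s) (x : ℝ) :
    ENNReal.ofReal (|x| ^ s) = ‖x‖ₑ ^ s := by
  rw [← ENNReal.ofReal_rpow_of_nonneg (abs_nonneg _) (by linarith), ← Real.norm_eq_abs,
    ofReal_norm]

lemma eLpNorm_rpow' {α : Type*} [MeasurableSpace α] (μ : Measure α) (s : ℝ) (hs : 1 ≤ s)
    (f : α → ℝ) :
    eLpNorm f (ENNReal.ofReal s) μ = (∫⁻ z, ‖f z‖ₑ ^ s ∂μ) ^ (1/s) := by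
  rw [eLpNorm_eq_lintegral_rpow_enorm_toReal (by simp; linarith) (by simp),
    ENNReal.toReal_ofReal (by linarith)]

lemma lsAvgE_eq {n : ℕ} (s : ℝ) (hs : 1 ≤ s) (u : EuclideanSpace ℝ (Fin n) → ℝ)
    (E : Set (EuclideanSpace ℝ (Fin n))) :
    lsAvgE s u E = ∫⁻ z, ‖u z - (⨍ y in E, u y)‖ₑ ^ s ∂(nm E) := by
  rw [lsAvgE, lintegral_nm]
  simp_rw [ofReal_abs_rpow s hs]

lemma lsAvgE_rpow {n : ℕ} (s : ℝ) (hs : 1 ≤ s) (u : EuclideanSpace ℝ (Fin n) → ℝ)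
    (E : Set (EuclideanSpace ℝ (Fin n))) :
    lsAvgE s u E ^ (1/s) =
      eLpNorm (fun z => u z - (⨍ y in E, u y)) (ENNReal.ofReal s) (nm E) := by
  rw [lsAvgE_eq s hs, eLpNorm_rpow' _ s hs]

lemma one_le_ofReal' {s : ℝ} (hs : 1 ≤ s) : (1 : ℝ≥0∞) ≤ ENNReal.ofReal s := by
  simpa using ENNReal.ofReal_le_ofReal hs

lemma memLp_of_sub {α : Type*} [MeasurableSpace α] (μ : Measure α) [IsProbabilityMeasure μ]
    (p : ℝ≥0∞) (u : α → ℝ) (c : ℝ) (hu : AEStronglyMeasurable u μ)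
    (h : eLpNorm (fun z => u z - c) p μ ≠ ⊤) : MemLp u p μ := by
  have h1 : MemLp (fun z => u z - c) p μ :=
    ⟨hu.sub aestronglyMeasurable_const, h.lt_top⟩
  have := h1.add (memLp_const c)
  convert this using 1
  ext z; simp

lemma eLpNorm_sub_mean_le {α : Type*} [MeasurableSpace α] (μ : Measure α)
    [IsProbabilityMeasure μ] (s : ℝ) (hs : 1 ≤ s) (u : α → ℝ) (c : ℝ)
    (hu : AEStronglyMeasurable u μ) :
    eLpNorm (fun z => u z - ∫ y, u y ∂μ) (ENNReal.ofReal s) μ ≤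
      2 * eLpNorm (fun z => u z - c) (ENNReal.ofReal s) μ := by
  have hp := one_le_ofReal' hs
  by_cases h : eLpNorm (fun z => u z - c) (ENNReal.ofReal s) μ = ⊤
  · rw [h]; simp
  have hL := memLp_of_sub μ _ u c hu h
  have hi : Integrable u μ := hL.integrable hp
  have hm : AEStronglyMeasurable (fun z => u z - c) μ := hu.sub aestronglyMeasurable_const
  have h1 : ‖c - ∫ y, u y ∂μ‖ₑ ≤ eLpNorm (fun z => u z - c) (ENNReal.ofReal s) μ := by
    have : c - ∫ y, u y ∂μ = - ∫ y, (u y - c) ∂μ := by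
      rw [integral_sub hi (integrable_const c)]; simp
    rw [this, enorm_neg]
    refine (enorm_integral_le_lintegral_enorm _).trans ?_
    rw [← eLpNorm_one_eq_lintegral_enorm]
    exact eLpNorm_le_eLpNorm_of_exponent_le hp hm
  have h2 : (fun z => u z - ∫ y, u y ∂μ) =
      (fun z => u z - c) + (fun _ => c - ∫ y, u y ∂μ) := by
    ext z; simp
  rw [h2, two_mul]
  refine (eLpNorm_add_le hm aestronglyMeasurable_const hp).trans ?_
  gcongr
  rw [eLpNorm_const _ (by simp; linarith) (IsProbabilityMeasure.ne_zero μ)]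
  simpa using h1

lemma nm_le {n : ℕ} {A B : Set (EuclideanSpace ℝ (Fin n))} (hAB : A ⊆ B) (K : ℝ≥0∞)
    (hB0 : volume B ≠ 0) (hA0 : volume A ≠ 0) (hBt : volume B ≠ ⊤)
    (h : volume B ≤ K * volume A) : nm A ≤ K • nm B := by
  have hAt : volume A ≠ ⊤ := ne_top_of_le_ne_top hBt (measure_mono hAB)
  rw [nm, nm, smul_smul]
  have hh : (volume A)⁻¹ ≤ K * (volume B)⁻¹ := by
    rw [ENNReal.inv_le_iff_le_mul (by intro; simp [hA0]) (by intro hh; exact absurd hh hAt)] 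
    calc (1 : ℝ≥0∞) = volume B * (volume B)⁻¹ := (ENNReal.mul_inv_cancel hB0 hBt).symm
      _ ≤ K * volume A * (volume B)⁻¹ := by gcongr
      _ = _ := by ring
  intro S
  simp only [Measure.smul_apply, smul_eq_mul]
  gcongr

lemma avg_nested {n : ℕ} {A B : Set (EuclideanSpace ℝ (Fin n))} (s : ℝ) (hs : 1 ≤ s)
    (u : EuclideanSpace ℝ (Fin n) → ℝ) (M : ℝ≥0∞) (hM : M ≠ ⊤) (hAB : A ⊆ B) (K : ℝ≥0∞)
    (hB0 : volume B ≠ 0) (hA0 : volume A ≠ 0) (hBt : volume B ≠ ⊤)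
    (h : volume B ≤ K * volume A) (hKt : K ≠ ⊤)
    (hu : AEStronglyMeasurable u (volume.restrict B))
    (hosc : lsAvgE s u B ^ (1/s) ≤ M) :
    ‖(⨍ y in A, u y) - ⨍ y in B, u y‖ₑ ≤ K * M := by
  have hp := one_le_ofReal' hs
  have hAt : volume A ≠ ⊤ := ne_top_of_le_ne_top hBt (measure_mono hAB)
  have := nm_prob hA0 hAt
  have := nm_prob hB0 hBt
  have huB : AEStronglyMeasurable u (nm B) := hu.smul_measure _
  rw [lsAvgE_rpow s hs] at hosc
  set c := ⨍ y in B, u y with hc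
  have hL := memLp_of_sub (nm B) _ u c huB (ne_top_of_le_ne_top hM hosc)
  have hiB : Integrable u (nm B) := hL.integrable hp
  have hle := nm_le hAB K hB0 hA0 hBt h
  have hiA : Integrable u (nm A) := (hiB.smul_measure hKt).mono_measure hle
  have : (⨍ y in A, u y) - c = ∫ y, (u y - c) ∂(nm A) := by
    rw [integral_sub hiA (integrable_const c), avg_eq_nm]; simp
  rw [this]
  refine (enorm_integral_le_lintegral_enorm _).trans ?_
  refine (lintegral_mono' hle le_rfl).trans ?_
  rw [lintegral_smul_measure, smul_eq_mul]
  gcongr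
  rw [← eLpNorm_one_eq_lintegral_enorm]
  exact (eLpNorm_le_eLpNorm_of_exponent_le hp (huB.sub aestronglyMeasurable_const)).trans hosc

lemma vol_ball_pos {n : ℕ} (x : EuclideanSpace ℝ (Fin n)) {r : ℝ} (hr : 0 < r) :
    volume (ball x r) ≠ 0 := (measure_ball_pos volume x hr).ne'

lemma vol_ball_le {n : ℕ} (x y : EuclideanSpace ℝ (Fin n)) {r R k : ℝ} (hr : 0 < r)
    (hR : 0 < R) (h : R ≤ k * r) :
    volume (ball x R) ≤ ENNReal.ofReal (k ^ n) * volume (ball y r) := by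
  have hk : 0 ≤ k := by
    by_contra hk
    push Not at hk
    nlinarith
  rw [Measure.addHaar_ball_of_pos _ _ hr, Measure.addHaar_ball_of_pos _ _ hR, ← mul_assoc,
    ← ENNReal.ofReal_mul (by positivity)]
  gcongr
  simp only [finrank_euclideanSpace, Fintype.card_fin]
  rw [← mul_pow]
  gcongr

/-- Whitney radius. -/
noncomputable def wr {n : ℕ} (Ω : Set (EuclideanSpace ℝ (Fin n)))
    (z : EuclideanSpace ℝ (Fin n)) : ℝ := infDist z Ωᶜ / 4

lemma wr_pos {n : ℕ} {Ω : Set (EuclideanSpace ℝ (Fin n))} (ho : IsOpen Ω)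
    (hne : (Ωᶜ).Nonempty) {z : EuclideanSpace ℝ (Fin n)} (hz : z ∈ Ω) : 0 < wr Ω z := by
  have := (ho.isClosed_compl.notMem_iff_infDist_pos hne).1 (by simpa using hz)
  unfold wr; linarith

lemma wr_lip {n : ℕ} (Ω : Set (EuclideanSpace ℝ (Fin n))) (z w : EuclideanSpace ℝ (Fin n)) :
    wr Ω z ≤ wr Ω w + dist z w / 4 := by
  have := @infDist_le_infDist_add_dist _ _ Ωᶜ z w
  unfold wr; linarith

lemma wr_ball {n : ℕ} (Ω : Set (EuclideanSpace ℝ (Fin n))) (z : EuclideanSpace ℝ (Fin n)) :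
    ball z (4 * wr Ω z) ⊆ Ω := by
  have := @ball_infDist_compl_subset _ _ Ω z
  unfold wr
  convert this using 2
  ring

/-- the property used for chaining -/
def ChainP {n : ℕ} (Ω : Set (EuclideanSpace ℝ (Fin n))) (w : EuclideanSpace ℝ (Fin n) → ℝ)
    (D : ℝ) : Prop :=
  ∀ z ∈ Ω, ∀ z' ∈ Ω, dist z z' ≤ wr Ω z → |w z - w z'| ≤ D

lemma chainP_avg {n : ℕ} {Ω : Set (EuclideanSpace ℝ (Fin n))} (ho : IsOpen Ω)
    (hne : (Ωᶜ).Nonempty) (s : ℝ) (hs : 1 ≤ s)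
    (u : EuclideanSpace ℝ (Fin n) → ℝ) (hu : LocallyIntegrableOn u Ω volume)
    (M : ℝ≥0∞) (hM : M ≠ ⊤)
    (hosc : ∀ x ρ, 0 < ρ → ball x ρ ⊆ Ω → lsAvgE s u (ball x ρ) ^ (1/s) ≤ M) :
    ChainP Ω (fun z => ⨍ y in ball z (wr Ω z), u y) (2 * 6 ^ n * M.toReal) := by
  intro z hz z' hz' hd
  have h1 := wr_pos ho hne hz
  have h2 := wr_pos ho hne hz'
  have h3 := wr_lip Ω z z'
  have h4 := wr_lip Ω z' z
  rw [dist_comm z' z] at h4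
  set B := ball z (4 * wr Ω z)
  have hB : B ⊆ Ω := wr_ball Ω z
  have huB : AEStronglyMeasurable u (volume.restrict B) :=
    hu.aestronglyMeasurable.mono_measure (Measure.restrict_mono hB le_rfl)
  have key : ∀ a r, 0 < r → 4 * wr Ω z ≤ 6 * r → ball a r ⊆ B →
      ‖(⨍ y in ball a r, u y) - ⨍ y in B, u y‖ₑ ≤ ENNReal.ofReal (6 ^ n) * M := by
    intro a r hr hr6 hsub
    exact avg_nested s hs u M hM hsub _ (vol_ball_pos _ (by linarith)) (vol_ball_pos _ hr)
      measure_ball_lt_top.ne (vol_ball_le _ _ hr (by linarith) hr6) ENNReal.ofReal_ne_top huB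
      (hosc _ _ (by linarith) hB)
  have key2 : ∀ a r, 0 < r → 4 * wr Ω z ≤ 6 * r → ball a r ⊆ B →
      |(⨍ y in ball a r, u y) - ⨍ y in B, u y| ≤ 6 ^ n * M.toReal := by
    intro a r hr hr6 hsub
    have := ENNReal.toReal_mono (by finiteness) (key a r hr hr6 hsub)
    rw [ENNReal.toReal_mul, ENNReal.toReal_ofReal (by positivity)] at this
    simpa using this
  have ka := key2 z (wr Ω z) h1 (by linarith) (ball_subset_ball (by linarith))
  have kb := key2 z' (wr Ω z') h2 (by linarith)
    (ball_subset_ball' (by rw [dist_comm z' z]; linarith))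
  rw [abs_le] at *
  constructor <;> simp only <;> linarith

/-- Whitney averaging inequality. -/
lemma whitney_avg {n : ℕ} {Ω : Set (EuclideanSpace ℝ (Fin n))} (ho : IsOpen Ω)
    (hne : (Ωᶜ).Nonempty) (f : EuclideanSpace ℝ (Fin n) → ℝ≥0∞)
    (hf : AEMeasurable f (volume.restrict Ω)) :
    ∫⁻ z in Ω, f z ≤ ENNReal.ofReal (3 ^ n) *
      ∫⁻ z in Ω, ∫⁻ y, f y ∂(nm (ball z (wr Ω z))) := by
  have hcont : Continuous (wr Ω) := (continuous_infDist_pt _).div_const 4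
  let g : EuclideanSpace ℝ (Fin n) → EuclideanSpace ℝ (Fin n) → ℝ≥0∞ := fun z y =>
    ({p : EuclideanSpace ℝ (Fin n) × EuclideanSpace ℝ (Fin n) | dist p.2 p.1 < wr Ω p.1}.indicator
      (fun p => (volume (ball p.1 (wr Ω p.1)))⁻¹ * f p.2)) (z, y)
  have hvolm : Measurable fun z : EuclideanSpace ℝ (Fin n) => volume (ball z (wr Ω z)) := by
    have : (fun z : EuclideanSpace ℝ (Fin n) => volume (ball z (wr Ω z))) =
        fun z => if 0 < wr Ω z then
          ENNReal.ofReal (wr Ω z ^ n) * volume (ball (0 : EuclideanSpace ℝ (Fin n)) 1) else 0 := by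
      ext z
      split_ifs with h
      · rw [Measure.addHaar_ball_of_pos _ _ h]; simp
      · rw [ball_eq_empty.2 (not_lt.1 h)]; simp
    rw [this]
    refine Measurable.ite (measurableSet_lt measurable_const hcont.measurable) ?_
      measurable_const
    exact ((hcont.measurable.pow_const n).ennreal_ofReal).mul_const _
  have hS : MeasurableSet {p : EuclideanSpace ℝ (Fin n) × EuclideanSpace ℝ (Fin n) |
      dist p.2 p.1 < wr Ω p.1} := by
    refine IsOpen.measurableSet ?_
    exact isOpen_lt (continuous_snd.dist continuous_fst) (hcont.comp continuous_fst)
  have hg : AEMeasurable (Function.uncurry g) ((volume.restrict Ω).prod (volume.restrict Ω)) := by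
    have : Function.uncurry g = ({p : EuclideanSpace ℝ (Fin n) × EuclideanSpace ℝ (Fin n) |
        dist p.2 p.1 < wr Ω p.1}.indicator
        (fun p => (volume (ball p.1 (wr Ω p.1)))⁻¹ * f p.2)) := by
      ext ⟨a, b⟩; rfl
    rw [this]
    refine AEMeasurable.indicator ?_ hS
    refine AEMeasurable.mul ?_ hf.comp_snd
    exact ((hvolm.comp measurable_fst).inv).aemeasurable
  have e1 : ∀ z ∈ Ω, ∫⁻ y, f y ∂(nm (ball z (wr Ω z))) = ∫⁻ y in Ω, g z y := by
    intro z hz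
    have hsub : ball z (wr Ω z) ⊆ Ω :=
      (ball_subset_ball (by linarith [wr_pos ho hne hz])).trans (wr_ball Ω z)
    have : (fun y => g z y) = (ball z (wr Ω z)).indicator
        (fun y => (volume (ball z (wr Ω z)))⁻¹ * f y) := by
      ext y; simp [g, indicator, mem_ball]
    rw [this, lintegral_indicator measurableSet_ball, Measure.restrict_restrict measurableSet_ball,
      inter_eq_left.2 hsub, lintegral_nm, lintegral_const_mul']
    exact ENNReal.inv_ne_top.2 (vol_ball_pos _ (wr_pos ho hne hz))
  rw [setLIntegral_congr_fun ho.measurableSet e1, lintegral_lintegral_swap hg,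
    ← lintegral_const_mul' _ _ ENNReal.ofReal_ne_top]
  refine setLIntegral_mono_ae' ho.measurableSet (Filter.Eventually.of_forall ?_)
  intro y hy
  have hy0 := wr_pos ho hne hy
  set b := ball y (wr Ω y / 2)
  have hb : b ⊆ Ω := (ball_subset_ball (by linarith)).trans (wr_ball Ω y)
  have hbv : volume b ≠ 0 := vol_ball_pos _ (by linarith)
  have hbt : volume b ≠ ⊤ := measure_ball_lt_top.ne
  calc f y = ENNReal.ofReal (3 ^ n) * (ENNReal.ofReal (3 ^ n))⁻¹ * (volume b)⁻¹ * volume b * f y := by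
        rw [ENNReal.mul_inv_cancel (by simp) ENNReal.ofReal_ne_top, one_mul,
          ENNReal.inv_mul_cancel hbv hbt, one_mul]
    _ = ENNReal.ofReal (3 ^ n) * ∫⁻ z in b, (ENNReal.ofReal (3 ^ n) * (volume b))⁻¹ * f y := by
        rw [setLIntegral_const, ENNReal.mul_inv (Or.inr hbt) (Or.inr hbv)]; ring
    _ ≤ ENNReal.ofReal (3 ^ n) * ∫⁻ z in b, g z y := by
        gcongr 1
        refine setLIntegral_mono_ae' measurableSet_ball (Filter.Eventually.of_forall ?_)
        intro z hz
        have hz' : dist z y < wr Ω y / 2 := hz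
        have l1 := wr_lip Ω y z
        have l2 := wr_lip Ω z y
        rw [dist_comm y z] at l1
        have hmem : dist y z < wr Ω z := by rw [dist_comm]; linarith
        have : g z y = (volume (ball z (wr Ω z)))⁻¹ * f y := by
          simp [g, indicator, hmem]
        rw [this]
        gcongr
        exact vol_ball_le _ _ (by linarith) (by linarith) (by linarith)
    _ ≤ _ := by
        gcongr 1
        exact lintegral_mono_set hb

theorem averaging_of_chain {n : ℕ} {Ω : Set (EuclideanSpace ℝ (Fin n))} (ho : IsOpen Ω)
    (hne : (Ωᶜ).Nonempty) (h0 : volume Ω ≠ 0) (ht : volume Ω ≠ ⊤) (s : ℝ) (hs : 1 ≤ s)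
    (z0 : EuclideanSpace ℝ (Fin n)) (G : EuclideanSpace ℝ (Fin n) → ℝ≥0∞)
    (hG : ∫⁻ z in Ω, G z ≠ ⊤)
    (hch : ∀ (w : EuclideanSpace ℝ (Fin n) → ℝ) (D : ℝ), 0 ≤ D → ChainP Ω w D →
      ∀ z ∈ Ω, ‖w z - w z0‖ₑ ^ s ≤ ENNReal.ofReal D ^ s * G z) :
    IsLsAveragingDomain s Ω := by
  have hs0 : 0 < s := by linarith
  set K : ℝ≥0∞ := ENNReal.ofReal (2 * 6 ^ n) with hK
  set Q : ℝ≥0∞ := (volume Ω)⁻¹ * (ENNReal.ofReal (3 ^ n) *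
    (2 ^ (s-1) * (volume Ω + K ^ s * ∫⁻ z in Ω, G z))) with hQ
  have hKt : K ≠ ⊤ := ENNReal.ofReal_ne_top
  have hQt : Q ≠ ⊤ := by
    have e1 : (volume Ω)⁻¹ ≠ ⊤ := ENNReal.inv_ne_top.2 h0
    have e2 : K ^ s ≠ ⊤ := ENNReal.rpow_ne_top_of_nonneg hs0.le hKt
    have e3 : (2 : ℝ≥0∞) ^ (s-1) ≠ ⊤ := ENNReal.rpow_ne_top_of_nonneg (by linarith) (by simp)
    finiteness
  refine ⟨2 * Q ^ (1/s) + 1, ?_, ?_⟩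
  · have : Q ^ (1/s) ≠ ⊤ := ENNReal.rpow_ne_top_of_nonneg (by positivity) hQt
    finiteness
  intro u hu
  set M := ⨆ (x : EuclideanSpace ℝ (Fin n)) (ρ : ℝ) (_ : 0 < ρ ∧ ball x ρ ⊆ Ω),
          (lsAvgE s u (ball x ρ)) ^ (1/s) with hMdef
  by_cases hM : M = ⊤
  · rw [hM, ENNReal.mul_top (by simp)]; exact le_top
  have hosc : ∀ x ρ, 0 < ρ → ball x ρ ⊆ Ω → lsAvgE s u (ball x ρ) ^ (1/s) ≤ M := by
    intro x ρ h1 h2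
    exact le_iSup_of_le x (le_iSup_of_le ρ (le_iSup_of_le ⟨h1, h2⟩ le_rfl))
  have hcp := chainP_avg ho hne s hs u hu M hM hosc
  set w : EuclideanSpace ℝ (Fin n) → ℝ := fun z => ⨍ y in ball z (wr Ω z), u y with hw
  have hch' := hch w _ (by positivity) hcp
  have hD : ENNReal.ofReal (2 * 6 ^ n * M.toReal) = K * M := by
    rw [ENNReal.ofReal_mul (by positivity), ENNReal.ofReal_toReal hM]
  rw [hD] at hch'
  have := nm_prob h0 ht
  have hum := hu.aestronglyMeasurable
  have huN : AEStronglyMeasurable u (nm Ω) := hum.smul_measure _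
  have main : ∫⁻ z, ‖u z - w z0‖ₑ ^ s ∂(nm Ω) ≤ Q * M ^ s := by
    rw [lintegral_nm]
    have hfm : AEMeasurable (fun z => ‖u z - w z0‖ₑ ^ s) (volume.restrict Ω) :=
      ((hum.sub aestronglyMeasurable_const).enorm).pow_const s
    have b1 : ∀ z ∈ Ω, ∫⁻ y, ‖u y - w z0‖ₑ ^ s ∂(nm (ball z (wr Ω z))) ≤
        2 ^ (s-1) * (M ^ s + K ^ s * M ^ s * G z) := by
      intro z hz
      have hz0 := wr_pos ho hne hz
      have hsub : ball z (wr Ω z) ⊆ Ω :=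
        (ball_subset_ball (by linarith)).trans (wr_ball Ω z)
      have := nm_prob (vol_ball_pos z hz0) (measure_ball_lt_top (μ := volume)).ne
      have o1 := hosc z _ hz0 hsub
      have o2 : lsAvgE s u (ball z (wr Ω z)) ≤ M ^ s := by
        rwa [one_div, ENNReal.rpow_inv_le_iff hs0] at o1
      rw [lsAvgE_eq s hs] at o2
      calc ∫⁻ y, ‖u y - w z0‖ₑ ^ s ∂(nm (ball z (wr Ω z)))
          ≤ ∫⁻ y, 2 ^ (s-1) * (‖u y - w z‖ₑ ^ s + ‖w z - w z0‖ₑ ^ s) ∂(nm (ball z (wr Ω z))) := by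
            refine lintegral_mono fun y => ?_
            refine le_trans ?_ (ENNReal.rpow_add_le_mul_rpow_add_rpow _ _ hs)
            gcongr
            have : u y - w z0 = (u y - w z) + (w z - w z0) := by ring
            rw [this]
            exact enorm_add_le _ _
        _ = 2 ^ (s-1) * (∫⁻ y, ‖u y - w z‖ₑ ^ s ∂(nm (ball z (wr Ω z))) + ‖w z - w z0‖ₑ ^ s) := by
            rw [lintegral_const_mul' _ _ (ENNReal.rpow_ne_top_of_nonneg (by linarith) (by simp)),
              lintegral_add_right _ measurable_const]
            simp
        _ ≤ _ := by
            gcongr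
            refine (hch' z hz).trans ?_
            rw [ENNReal.mul_rpow_of_nonneg _ _ hs0.le]
    have hMs : M ^ s ≠ ⊤ := ENNReal.rpow_ne_top_of_nonneg hs0.le hM
    have hKs : K ^ s ≠ ⊤ := ENNReal.rpow_ne_top_of_nonneg hs0.le hKt
    calc (volume Ω)⁻¹ * ∫⁻ z in Ω, ‖u z - w z0‖ₑ ^ s
        ≤ (volume Ω)⁻¹ * (ENNReal.ofReal (3 ^ n) *
          ∫⁻ z in Ω, 2 ^ (s-1) * (M ^ s + K ^ s * M ^ s * G z)) := by
          gcongr 1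
          refine (whitney_avg ho hne _ hfm).trans ?_
          gcongr 1
          exact setLIntegral_mono_ae' ho.measurableSet (Filter.Eventually.of_forall b1)
      _ = Q * M ^ s := by
          rw [lintegral_const_mul' _ _ (ENNReal.rpow_ne_top_of_nonneg (by linarith) (by simp)),
              lintegral_add_left measurable_const, lintegral_const_mul' _ _ (by finiteness),
              setLIntegral_const, hQ]
          ring
  rw [lsAvgE_rpow s hs, avg_eq_nm]
  refine (eLpNorm_sub_mean_le (nm Ω) s hs u (w z0) huN).trans ?_
  rw [eLpNorm_rpow' _ s hs]
  have : (∫⁻ z, ‖u z - w z0‖ₑ ^ s ∂(nm Ω)) ^ (1/s) ≤ Q ^ (1/s) * M := by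
    refine (ENNReal.rpow_le_rpow main (by positivity)).trans ?_
    rw [ENNReal.mul_rpow_of_nonneg _ _ (by positivity), ← ENNReal.rpow_mul, mul_one_div_cancel hs0.ne',
      ENNReal.rpow_one]
  calc 2 * (∫⁻ z, ‖u z - w z0‖ₑ ^ s ∂(nm Ω)) ^ (1/s) ≤ 2 * (Q ^ (1/s) * M) := by gcongr
    _ = 2 * Q ^ (1/s) * M := by ring
    _ ≤ _ := by gcongr; exact le_self_add

lemma chain_seg {n : ℕ} {Ω : Set (EuclideanSpace ℝ (Fin n))}
    {w : EuclideanSpace ℝ (Fin n) → ℝ} {D : ℝ} (hw : ChainP Ω w D)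
    (γ : ℝ → EuclideanSpace ℝ (Fin n)) (L : ℝ) (hL : ∀ t t', dist (γ t) (γ t') ≤ L * |t - t'|)
    (t0 t1 ρ : ℝ) (h01 : t0 ≤ t1) (N : ℕ) (hN : 1 ≤ N)
    (hγ : ∀ t, t0 ≤ t → t ≤ t1 → γ t ∈ Ω ∧ ρ ≤ wr Ω (γ t))
    (hlen : L * (t1 - t0) ≤ N * ρ) : |w (γ t0) - w (γ t1)| ≤ N * D := by
  have hN' : (0 : ℝ) < N := by exact_mod_cast hN
  have key : ∀ i : ℕ, i ≤ N → |w (γ t0) - w (γ (t0 + i / N * (t1 - t0)))| ≤ i * D := by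
    intro i
    induction i with
    | zero => intro _; simp
    | succ i ih =>
      intro hi
      have ih' := ih (by omega)
      have hi' : ((i + 1 : ℕ) : ℝ) ≤ N := by exact_mod_cast hi
      push_cast at hi' ⊢
      have q1 : (0 : ℝ) ≤ i / N := by positivity
      have q2 : ((i : ℝ) + 1) / N ≤ 1 := by rw [div_le_one hN']; exact hi'
      have q3 : (i : ℝ) / N ≤ (i + 1) / N := by gcongr; linarith
      have hd : 0 ≤ t1 - t0 := by linarith
      have m1 := hγ (t0 + i / N * (t1 - t0)) (by nlinarith) (by nlinarith)
      have m2 := hγ (t0 + (i + 1) / N * (t1 - t0)) (by nlinarith) (by nlinarith)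
      have hdist : dist (γ (t0 + i / N * (t1 - t0))) (γ (t0 + (i + 1) / N * (t1 - t0))) ≤
          wr Ω (γ (t0 + i / N * (t1 - t0))) := by
        refine (hL _ _).trans (le_trans ?_ m1.2)
        have : t0 + i / N * (t1 - t0) - (t0 + (i + 1) / N * (t1 - t0)) = - ((t1 - t0) / N) := by
          field_simp; ring
        rw [this, abs_neg, abs_of_nonneg (by positivity), mul_div_assoc', div_le_iff₀ hN']
        linarith
      have := hw _ m1.1 _ m2.1 hdist
      rw [abs_le] at *
      constructor <;> linarith
  have := key N le_rfl
  rwa [div_self hN'.ne', one_mul, add_sub_cancel] at this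

lemma chain_log {n : ℕ} {Ω : Set (EuclideanSpace ℝ (Fin n))}
    {w : EuclideanSpace ℝ (Fin n) → ℝ} {D : ℝ} (hw : ChainP Ω w D)
    (γ : ℝ → EuclideanSpace ℝ (Fin n)) (L : ℝ) (hL : ∀ t t', dist (γ t) (γ t') ≤ L * |t - t'|)
    (κ : ℝ) (hκ : 0 ≤ κ) (N : ℕ) (hN : 1 ≤ N) (j : ℕ)
    (hγ : ∀ t, 0 ≤ t → t ≤ 1 → γ t ∈ Ω ∧ κ * (t + (1/2) ^ j) ≤ wr Ω (γ t))
    (hlen : L ≤ N * κ) : |w (γ 0) - w (γ 1)| ≤ (j + 1) * (N * D) := by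
  have key : ∀ i : ℕ, |w (γ ((1/2) ^ i)) - w (γ 1)| ≤ i * (N * D) := by
    intro i
    induction i with
    | zero => simp
    | succ i ih =>
      have p0 : (0 : ℝ) < (1/2) ^ i := by positivity
      have p1 : ((1 : ℝ)/2) ^ i ≤ 1 := pow_le_one₀ (by norm_num) (by norm_num)
      have p2 : ((1 : ℝ)/2) ^ (i + 1) = (1/2) ^ i / 2 := by rw [pow_succ]; ring
      have := chain_seg hw γ L hL ((1/2) ^ (i+1)) ((1/2) ^ i) (κ * (1/2) ^ (i+1)) (by linarith) N hN
        (by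
          intro t ht ht'
          have := hγ t (by linarith) (by linarith)
          refine ⟨this.1, le_trans ?_ this.2⟩
          have : (0 : ℝ) < (1/2) ^ j := by positivity
          gcongr
          linarith) (by
            rw [p2]
            nlinarith)
      rw [abs_le] at *
      push_cast
      constructor <;> linarith
  have p0 : (0 : ℝ) < (1/2) ^ j := by positivity
  have p1 : ((1 : ℝ)/2) ^ j ≤ 1 := pow_le_one₀ (by norm_num) (by norm_num)
  have k1 := key j
  have k2 := chain_seg hw γ L hL 0 ((1/2) ^ j) (κ * (1/2) ^ j) p0.le N hN
    (by
      intro t ht ht'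
      have := hγ t ht (by linarith)
      refine ⟨this.1, le_trans ?_ this.2⟩
      gcongr
      linarith) (by nlinarith)
  rw [abs_le] at *
  constructor <;> linarith

lemma exists_G {α : Type*} [MeasurableSpace α] (μ : Measure α) (Ω : Set α)
    (hΩ : MeasurableSet Ω) (hΩt : μ Ω ≠ ⊤) (S : ℕ → Set α) (hS : ∀ j, MeasurableSet (S j))
    (hcov : ∀ z ∈ Ω, ∃ j, z ∈ S j) (a : ℕ → ℝ≥0∞) (ha : a 0 ≠ ⊤)
    (hsum : ∑' j, a (j+1) * μ (Ω \ S j) ≠ ⊤) :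
    ∃ G : α → ℝ≥0∞, Measurable G ∧ ∫⁻ z in Ω, G z ∂μ ≠ ⊤ ∧ ∀ z ∈ Ω, ∃ j, z ∈ S j ∧ a j ≤ G z := by
  classical
  have hm : ∀ j, Measurable ((Ω \ S j).indicator (fun _ => a (j+1))) := fun j =>
    measurable_const.indicator (hΩ.diff (hS j))
  refine ⟨fun z => a 0 + ∑' j, (Ω \ S j).indicator (fun _ => a (j+1)) z, ?_, ?_, ?_⟩
  · exact measurable_const.add (Measurable.tsum hm)
  · rw [lintegral_add_left measurable_const, setLIntegral_const,
      lintegral_tsum (fun j => (hm j).aemeasurable)]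
    have : ∀ j, ∫⁻ z in Ω, (Ω \ S j).indicator (fun _ => a (j+1)) z ∂μ = a (j+1) * μ (Ω \ S j) := by
      intro j
      rw [lintegral_indicator (hΩ.diff (hS j)), setLIntegral_const,
        Measure.restrict_apply (hΩ.diff (hS j)), inter_eq_left.2 sdiff_subset]
    simp_rw [this]
    finiteness
  · intro z hz
    have hex := hcov z hz
    refine ⟨Nat.find hex, Nat.find_spec hex, ?_⟩
    rcases h : Nat.find hex with _ | i
    · exact le_self_add
    · have hi : z ∉ S i := Nat.find_min hex (by omega)
      refine le_trans ?_ le_add_self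
      refine le_trans ?_ (ENNReal.le_tsum i)
      simp [indicator, hz, hi]

lemma log_summable (s c : ℝ) :
    Summable fun j : ℕ => ((j : ℝ) + 2) ^ s * (c * (1/2) ^ j) := by
  obtain ⟨m, hm⟩ := exists_nat_ge s
  have h1 : Summable fun j : ℕ => (j : ℝ) ^ m * (1/2 : ℝ) ^ j :=
    summable_pow_mul_geometric_of_norm_lt_one m (by norm_num)
  have h2 := ((summable_nat_add_iff 2).2 h1).mul_left (4 * |c|)
  refine Summable.of_norm_bounded h2 ?_
  intro j
  have e : ((j : ℝ) + 2) ^ s ≤ ((j : ℝ) + 2) ^ m := by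
    rw [← Real.rpow_natCast]
    exact Real.rpow_le_rpow_of_exponent_le (by linarith [(Nat.cast_nonneg j : (0:ℝ) ≤ j)]) hm
  rw [norm_mul, norm_mul, Real.norm_of_nonneg (by positivity), Real.norm_eq_abs c,
    Real.norm_of_nonneg (by positivity)]
  push_cast
  rw [pow_add]
  calc ((j : ℝ) + 2) ^ s * (|c| * (1/2) ^ j) ≤ ((j : ℝ) + 2) ^ m * (|c| * (1/2) ^ j) := by gcongr
    _ = _ := by ring

lemma log_G {α : Type*} [MeasurableSpace α] (μ : Measure α) (Ω : Set α)
    (hΩ : MeasurableSet Ω) (hΩt : μ Ω ≠ ⊤) (S : ℕ → Set α) (hS : ∀ j, MeasurableSet (S j))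
    (hcov : ∀ z ∈ Ω, ∃ j, z ∈ S j) (s : ℝ) (hs : 1 ≤ s) (c : ℝ) (_hc : 0 ≤ c)
    (hv : ∀ j, μ (Ω \ S j) ≤ ENNReal.ofReal (c * (1/2) ^ j)) :
    ∃ G : α → ℝ≥0∞, Measurable G ∧ ∫⁻ z in Ω, G z ∂μ ≠ ⊤ ∧
      ∀ z ∈ Ω, ∃ j : ℕ, z ∈ S j ∧ ENNReal.ofReal ((j : ℝ) + 1) ^ s ≤ G z := by
  refine exists_G μ Ω hΩ hΩt S hS hcov (fun j : ℕ => ENNReal.ofReal ((j : ℝ) + 1) ^ s) ?_ ?_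
  · exact ENNReal.rpow_ne_top_of_nonneg (by linarith) (by simp)
  · refine ne_top_of_le_ne_top (log_summable s c).tsum_ofReal_ne_top (ENNReal.tsum_le_tsum ?_)
    intro j
    rw [ENNReal.ofReal_mul (by positivity), ← ENNReal.ofReal_rpow_of_nonneg (by positivity) (by linarith)]
    push_cast
    rw [add_assoc, one_add_one_eq_two]
    gcongr
    exact hv j

theorem averaging_of_convex {n : ℕ} {Ω : Set (EuclideanSpace ℝ (Fin n))} (ho : IsOpen Ω)
    (hne : (Ωᶜ).Nonempty) (h0 : Ω.Nonempty) (ht : volume Ω ≠ ⊤) (hconv : Convex ℝ Ω)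
    (hbd : Bornology.IsBounded Ω) (s : ℝ) (hs : 1 ≤ s) : IsLsAveragingDomain s Ω := by
  have hs0 : 0 < s := by linarith
  obtain ⟨z0, hz0⟩ := h0
  obtain ⟨ρ, hρ, hball⟩ := Metric.isOpen_iff.1 ho z0 hz0
  obtain ⟨R, hR⟩ := hbd.subset_closedBall z0
  have hR0 : 0 ≤ R := by
    have := hR hz0; simpa using this
  set hom : ℝ → EuclideanSpace ℝ (Fin n) → EuclideanSpace ℝ (Fin n) :=
    fun l => AffineMap.homothety z0 l with hhom
  have homap : ∀ l z, hom l z = z0 + l • (z - z0) := by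
    intro l z; simp [hhom, AffineMap.homothety_apply, add_comm]
  let S : ℕ → Set (EuclideanSpace ℝ (Fin n)) := fun j =>
    if j = 0 then {z0} else hom (1 - (1/2) ^ j) '' Ω
  have hl0 : ∀ j : ℕ, (0 : ℝ) ≤ 1 - (1/2) ^ j := by
    intro j
    have : ((1 : ℝ)/2) ^ j ≤ 1 := pow_le_one₀ (by norm_num) (by norm_num)
    linarith
  have hlpos : ∀ j : ℕ, j ≠ 0 → (0 : ℝ) < 1 - (1/2) ^ j := by
    intro j hj
    have : ((1 : ℝ)/2) ^ j < 1 := pow_lt_one₀ (by norm_num) (by norm_num) hj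
    linarith
  have hSsub : ∀ j, S j ⊆ hom (1 - (1/2) ^ j) '' Ω := by
    intro j
    by_cases hj : j = 0
    · simp only [S, hj, if_true]
      rintro _ rfl
      exact ⟨_, hz0, by simp [homap]⟩
    · simp only [S, hj, if_false]; exact subset_rfl
  have hSm : ∀ j, MeasurableSet (S j) := by
    intro j
    by_cases hj : j = 0
    · simp [S, hj]
    · simp only [S, hj, if_false]
      exact (AffineMap.homothety_isOpenMap z0 _ (hlpos j hj).ne' _ ho).measurableSet
  have hSΩ : ∀ j, S j ⊆ Ω := by
    intro j
    refine (hSsub j).trans ?_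
    rintro _ ⟨z, hz, rfl⟩
    rw [homap]
    have : z0 + (1 - (1/2 : ℝ) ^ j) • (z - z0) = ((1/2 : ℝ) ^ j) • z0 + (1 - (1/2 : ℝ) ^ j) • z := by
      module
    rw [this]
    exact hconv hz0 hz (by positivity) (hl0 j) (by ring)
  have hv : ∀ j, volume (Ω \ S j) ≤ ENNReal.ofReal (n * (volume Ω).toReal * (1/2) ^ j) := by
    intro j
    rw [measure_sdiff (hSΩ j) (hSm j).nullMeasurableSet (ne_top_of_le_ne_top ht (measure_mono (hSΩ j)))]
    by_cases hj : j = 0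
    · by_cases hn : n = 0
      · subst hn
        have : Ω ⊆ S j := by
          intro z _
          simp only [S, hj, if_true]
          exact Subsingleton.elim _ _
        simp [tsub_eq_zero_of_le (measure_mono this)]
      refine tsub_le_self.trans ?_
      rw [hj, pow_zero, mul_one, ENNReal.ofReal_mul (by positivity), ENNReal.ofReal_toReal ht]
      refine le_mul_of_one_le_left (by simp) ?_
      have : (1 : ℝ) ≤ n := by exact_mod_cast Nat.one_le_iff_ne_zero.2 hn
      simpa using ENNReal.ofReal_le_ofReal this
    · simp only [S, hj, if_false]
      rw [hhom, Measure.addHaar_image_homothety]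
      simp only [finrank_euclideanSpace, Fintype.card_fin]
      obtain ⟨V, hV, hVe⟩ : ∃ V : ℝ, 0 ≤ V ∧ volume Ω = ENNReal.ofReal V :=
        ⟨_, ENNReal.toReal_nonneg, (ENNReal.ofReal_toReal ht).symm⟩
      rw [hVe, ENNReal.toReal_ofReal hV, tsub_le_iff_right,
        ← ENNReal.ofReal_mul (by positivity), ← ENNReal.ofReal_add (by positivity) (by positivity)]
      refine ENNReal.ofReal_le_ofReal ?_
      rw [abs_of_nonneg (pow_nonneg (hl0 j) _)]
      have b := one_add_mul_le_pow (a := -((1 : ℝ)/2) ^ j) (by linarith [hl0 j]) n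
      rw [← sub_eq_add_neg] at b
      nlinarith
  have hcov : ∀ z ∈ Ω, ∃ j, z ∈ S j := by
    intro z hz
    have htend : Filter.Tendsto (fun j : ℕ => z0 + (1 - (1/2 : ℝ) ^ j)⁻¹ • (z - z0)) Filter.atTop
        (nhds (z0 + (1 - (0 : ℝ))⁻¹ • (z - z0))) := by
      refine tendsto_const_nhds.add (Filter.Tendsto.smul_const ?_ _)
      refine Filter.Tendsto.inv₀ ?_ (by norm_num)
      exact tendsto_const_nhds.sub (tendsto_pow_atTop_nhds_zero_of_lt_one (by norm_num) (by norm_num))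
    have hlim : z0 + (1 - (0 : ℝ))⁻¹ • (z - z0) = z := by simp
    rw [hlim] at htend
    obtain ⟨j, hj, hj1⟩ := ((htend.eventually (ho.mem_nhds hz)).and
      (Filter.eventually_ge_atTop 1)).exists
    refine ⟨j, ?_⟩
    have hj0 : j ≠ 0 := by omega
    simp only [S, hj0, if_false]
    refine ⟨_, hj, ?_⟩
    rw [homap, add_sub_cancel_left, smul_smul, mul_inv_cancel₀ (hlpos j hj0).ne']
    simp
  obtain ⟨G, hGm, hGt, hGb⟩ := log_G volume Ω ho.measurableSet ht S hSm hcov s hs _ (by positivity) hv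
  obtain ⟨N, hN⟩ := exists_nat_ge (R / (ρ / 8) + 1)
  have hN1 : 1 ≤ N := by
    have : (0 : ℝ) ≤ R / (ρ / 8) := by positivity
    have : (1 : ℝ) ≤ N := by linarith
    exact_mod_cast this
  refine averaging_of_chain ho hne (ho.measure_pos _ ⟨z0, hz0⟩).ne' ht s hs z0
    (fun z => ENNReal.ofReal N ^ s * G z) ?_ ?_
  · rw [lintegral_const_mul _ hGm]
    exact ENNReal.mul_ne_top (ENNReal.rpow_ne_top_of_nonneg hs0.le ENNReal.ofReal_ne_top) hGt
  intro w D hD hw z hz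
  obtain ⟨j, hjS, hjG⟩ := hGb z hz
  obtain ⟨z1, hz1, hz1e⟩ := hSsub j hjS
  rw [homap] at hz1e
  have key := chain_log hw (fun t => z + t • (z0 - z)) R (by
    intro t t'
    have : (z + t • (z0 - z)) - (z + t' • (z0 - z)) = (t - t') • (z0 - z) := by module
    rw [dist_eq_norm, this, norm_smul, Real.norm_eq_abs, mul_comm]
    gcongr
    have := hR hz
    rwa [mem_closedBall, dist_comm, dist_eq_norm] at this) (ρ / 8) (by positivity) N hN1 j
    (by
      intro t ht0 ht1
      have p0 : (0 : ℝ) < (1/2) ^ j := by positivity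
      have p1 := hl0 j
      set l : ℝ := 1 - (1/2) ^ j with hl
      set m : ℝ := 1 - (1 - t) * l with hm
      have hm0 : (t + (1/2) ^ j) / 2 ≤ m := by
        rw [hm, hl]; nlinarith
      have hmpos : 0 < m := by linarith
      have hm1 : m ≤ 1 := by rw [hm]; nlinarith
      have hsub : ball (z + t • (z0 - z)) (m * ρ) ⊆ Ω := by
        intro q hq
        have hq' : z0 + m⁻¹ • (q - (z + t • (z0 - z))) ∈ Ω := by
          apply hball
          rw [mem_ball, dist_eq_norm, add_sub_cancel_left, norm_smul, Real.norm_eq_abs,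
            abs_of_pos (inv_pos.2 hmpos), inv_mul_lt_iff₀ hmpos]
          rwa [mem_ball, dist_eq_norm] at hq
        have := hconv hq' hz1 hmpos.le (by linarith : 0 ≤ 1 - m) (by ring)
        convert this using 1
        rw [smul_add, smul_smul, mul_inv_cancel₀ hmpos.ne', one_smul, ← hz1e, hm]
        module
      refine ⟨hsub (mem_ball_self (by positivity)), ?_⟩
      unfold wr
      have : m * ρ ≤ infDist (z + t • (z0 - z)) Ωᶜ := by
        rw [le_infDist hne]
        intro y hy
        by_contra hlt
        push Not at hlt
        exact hy (hsub (by rwa [mem_ball, dist_comm]))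
      nlinarith) (by
        have : R / (ρ / 8) ≤ N := by linarith
        rwa [div_le_iff₀ (by positivity)] at this)
  simp only [zero_smul, add_zero, one_smul, add_sub_cancel] at key
  calc ‖w z - w z0‖ₑ ^ s ≤ ENNReal.ofReal ((j + 1) * (N * D)) ^ s := by
        gcongr
        rw [← ofReal_norm, Real.norm_eq_abs]
        exact ENNReal.ofReal_le_ofReal key
    _ = ENNReal.ofReal D ^ s * (ENNReal.ofReal N ^ s * ENNReal.ofReal (j + 1) ^ s) := by
        rw [ENNReal.ofReal_mul (by positivity), ENNReal.ofReal_mul (by positivity),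
          ENNReal.mul_rpow_of_nonneg _ _ hs0.le, ENNReal.mul_rpow_of_nonneg _ _ hs0.le]
        ring
    _ ≤ _ := by gcongr

lemma radial_eq_norm {n : ℕ} [NeZero n] (z : EuclideanSpace ℝ (Fin n)) :
    radial z = ‖z - EuclideanSpace.single 0 (z 0)‖ := by
  rw [radial, EuclideanSpace.norm_eq]
  congr 1
  rw [← Finset.add_sum_erase Finset.univ _ (Finset.mem_univ (0 : Fin n))]
  simp only [PiLp.sub_apply, PiLp.single_apply, if_true, sub_self, norm_zero]
  rw [zero_pow two_ne_zero, zero_add]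
  refine Finset.sum_congr rfl ?_
  intro i hi
  have : i ≠ 0 := Finset.ne_of_mem_erase hi
  simp [this]

lemma radial_nonneg {n : ℕ} [NeZero n] (z : EuclideanSpace ℝ (Fin n)) : 0 ≤ radial z :=
  Real.sqrt_nonneg _

lemma radial_continuous {n : ℕ} [NeZero n] :
    Continuous (radial : EuclideanSpace ℝ (Fin n) → ℝ) := by
  unfold radial; fun_prop

lemma radial_add_le {n : ℕ} [NeZero n] (z w : EuclideanSpace ℝ (Fin n)) :
    radial (z + w) ≤ radial z + radial w := by
  simp only [radial_eq_norm]
  refine le_trans (le_of_eq ?_) (norm_add_le _ _)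
  congr 1
  ext i
  by_cases h : i = 0 <;> simp [h]

lemma radial_smul {n : ℕ} [NeZero n] (c : ℝ) (z : EuclideanSpace ℝ (Fin n)) :
    radial (c • z) = |c| * radial z := by
  simp only [radial_eq_norm]
  rw [← Real.norm_eq_abs, ← norm_smul]
  congr 1
  ext i
  by_cases h : i = 0 <;> simp [h]

lemma radial_le_norm {n : ℕ} [NeZero n] (z : EuclideanSpace ℝ (Fin n)) : radial z ≤ ‖z‖ := by
  rw [radial, EuclideanSpace.norm_eq]
  refine Real.sqrt_le_sqrt ?_
  simp only [Real.norm_eq_abs, sq_abs]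
  exact Finset.sum_le_sum_of_subset_of_nonneg (Finset.erase_subset _ _)
    (fun i _ _ => sq_nonneg _)

lemma radial_le_add_dist {n : ℕ} [NeZero n] (z w : EuclideanSpace ℝ (Fin n)) :
    radial w ≤ radial z + dist z w := by
  have := radial_add_le z (w - z)
  rw [add_sub_cancel] at this
  have h2 := radial_le_norm (w - z)
  rw [← dist_eq_norm, dist_comm] at h2
  linarith

lemma coord_le_dist {n : ℕ} (i : Fin n) (z w : EuclideanSpace ℝ (Fin n)) :
    |z i - w i| ≤ dist z w := by
  rw [dist_eq_norm]
  have := PiLp.norm_apply_le (p := 2) (z - w) i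
  simpa using this

lemma norm_le_radial {n : ℕ} [NeZero n] (z : EuclideanSpace ℝ (Fin n)) :
    ‖z‖ ≤ |z 0| + radial z := by
  rw [radial_eq_norm]
  have := norm_add_le (EuclideanSpace.single (0 : Fin n) (z 0)) (z - EuclideanSpace.single 0 (z 0))
  rw [add_sub_cancel] at this
  simpa using this

lemma cusp_open (n : ℕ) [NeZero n] (α : ℝ) (hα : 0 ≤ α) : IsOpen (cuspDomain n α) := by
  have h0 : Continuous fun z : EuclideanSpace ℝ (Fin n) => z 0 := by fun_prop
  refine (isOpen_lt continuous_const h0).inter ((isOpen_lt h0 continuous_const).inter ?_)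
  exact isOpen_lt radial_continuous (h0.rpow_const fun _ => Or.inr hα)

lemma cusp_bdd (n : ℕ) [NeZero n] (α : ℝ) (hα : 0 ≤ α) :
    Bornology.IsBounded (cuspDomain n α) := by
  refine (isBounded_closedBall (x := (0 : EuclideanSpace ℝ (Fin n))) (r := 2)).subset ?_
  rintro z ⟨h1, h2, h3⟩
  have := norm_le_radial z
  have h4 := Real.rpow_le_one h1.le h2.le hα
  rw [abs_of_pos h1] at this
  rw [mem_closedBall, dist_zero_right]
  linarith

lemma radial_single {n : ℕ} [NeZero n] (y : ℝ) :
    radial (EuclideanSpace.single (0 : Fin n) y) = 0 := by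
  rw [radial_eq_norm]; simp

lemma ax_mem (n : ℕ) [NeZero n] (α : ℝ) {y : ℝ} (h0 : 0 < y) (h1 : y < 1) :
    EuclideanSpace.single (0 : Fin n) y ∈ cuspDomain n α := by
  refine ⟨by simpa using h0, by simpa using h1, ?_⟩
  rw [radial_single]
  simpa using Real.rpow_pos_of_pos h0 α

lemma cusp_compl (n : ℕ) [NeZero n] (α : ℝ) : ((cuspDomain n α)ᶜ).Nonempty :=
  ⟨0, fun h => by simpa using h.1⟩

lemma cusp_vol_top (n : ℕ) [NeZero n] (α : ℝ) (hα : 0 ≤ α) : volume (cuspDomain n α) ≠ ⊤ :=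
  (cusp_bdd n α hα).measure_lt_top.ne

lemma cusp_vol_pos (n : ℕ) [NeZero n] (α : ℝ) (hα : 0 ≤ α) : volume (cuspDomain n α) ≠ 0 :=
  ((cusp_open n α hα).measure_pos _ ⟨_, ax_mem n α (y := 1/2) (by norm_num) (by norm_num)⟩).ne'

lemma cusp_convex (n : ℕ) [NeZero n] (α : ℝ) (hα : 0 ≤ α) (hα1 : α ≤ 1) :
    Convex ℝ (cuspDomain n α) := by
  rintro z ⟨z1, z2, z3⟩ w ⟨w1, w2, w3⟩ a b ha hb hab
  have hc := (Real.concaveOn_rpow hα hα1).2 (mem_Ici.2 z1.le) (mem_Ici.2 w1.le) ha hb hab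
  have hr := radial_add_le (a • z) (b • w)
  rw [radial_smul, radial_smul, abs_of_nonneg ha, abs_of_nonneg hb] at hr
  simp only [smul_eq_mul] at hc
  have e : (a • z + b • w) 0 = a * z 0 + b * w 0 := by simp
  rcases ha.eq_or_lt with rfl | ha'
  · have : b = 1 := by linarith
    subst this
    simpa using ⟨w1, w2, w3⟩
  refine ⟨?_, ?_, ?_⟩
  · rw [e]; nlinarith
  · rw [e]; nlinarith
  · rw [e]; nlinarith

/-- diagonal map -/
noncomputable def dT (n : ℕ) [NeZero n] (a b : ℝ) :
    EuclideanSpace ℝ (Fin n) →ₗ[ℝ] EuclideanSpace ℝ (Fin n) :=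
  Matrix.toLin (EuclideanSpace.basisFun (Fin n) ℝ).toBasis (EuclideanSpace.basisFun (Fin n) ℝ).toBasis
    (Matrix.diagonal fun i => if i = 0 then a else b)

lemma dT_det (n : ℕ) [NeZero n] (a b : ℝ) : LinearMap.det (dT n a b) = a * b ^ (n - 1) := by
  rw [dT, LinearMap.det_toLin, Matrix.det_diagonal,
    ← Finset.mul_prod_erase Finset.univ _ (Finset.mem_univ (0 : Fin n))]
  simp only [if_true]
  congr 1
  rw [Finset.prod_congr rfl (g := fun _ => b)]
  · simp
  · intro i hi
    simp [Finset.ne_of_mem_erase hi]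

lemma dT_apply (n : ℕ) [NeZero n] (a b : ℝ) (z : EuclideanSpace ℝ (Fin n)) (i : Fin n) :
    dT n a b z i = (if i = 0 then a else b) * z i := by
  have h : dT n a b z = ∑ j, (z j * (if j = 0 then a else b)) • EuclideanSpace.single j 1 := by
    rw [dT, Matrix.toLin_apply]
    refine Finset.sum_congr rfl ?_
    intro j _
    simp [Matrix.mulVec_diagonal, mul_comm]
  rw [h, WithLp.ofLp_sum, Finset.sum_apply, Finset.sum_eq_single i]
  · simp only [PiLp.smul_apply, PiLp.single_apply, if_true, smul_eq_mul, mul_one]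
    ring
  · intro j _ hj
    simp only [PiLp.smul_apply, PiLp.single_apply, if_neg hj.symm, smul_eq_mul, mul_zero]
  · simp

lemma dT_zero (n : ℕ) [NeZero n] (a b : ℝ) (z : EuclideanSpace ℝ (Fin n)) :
    dT n a b z 0 = a * z 0 := by simp [dT_apply]

lemma dT_radial (n : ℕ) [NeZero n] (a b : ℝ) (hb : 0 ≤ b) (z : EuclideanSpace ℝ (Fin n)) :
    radial (dT n a b z) = b * radial z := by
  have : b * radial z = radial (b • z) := by rw [radial_smul, abs_of_nonneg hb]
  rw [this]
  unfold radial
  congr 1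
  refine Finset.sum_congr rfl ?_
  intro i hi
  simp [dT_apply, Finset.ne_of_mem_erase hi]

lemma vol_lateral (n : ℕ) [NeZero n] (α : ℝ) (l : ℝ) (h0 : 0 ≤ l) (h1 : l ≤ 1) :
    ENNReal.ofReal (l ^ (n - 1)) * volume (cuspDomain n α) ≤
      volume (cuspDomain n α ∩ {z | radial z ≤ l * z 0 ^ α}) := by
  have := Measure.addHaar_image_linearMap volume (dT n 1 l) (cuspDomain n α)
  rw [dT_det, one_mul, abs_of_nonneg (by positivity)] at this
  rw [← this]
  refine measure_mono ?_
  rintro _ ⟨z, ⟨z1, z2, z3⟩, rfl⟩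
  have hr := radial_nonneg z
  simp only [cuspDomain, mem_inter_iff, mem_ofPred_eq, dT_zero, one_mul, dT_radial n 1 l h0]
  refine ⟨⟨z1, z2, ?_⟩, by gcongr⟩
  nlinarith

lemma det_pow (n : ℕ) [NeZero n] (α l : ℝ) (hl : 0 < l) :
    l * (l ^ α) ^ (n - 1) = l ^ (1 + α * (n - 1)) := by
  have hn : 1 ≤ n := Nat.one_le_iff_ne_zero.2 (NeZero.ne n)
  rw [Real.rpow_add hl, Real.rpow_one, Real.rpow_mul hl.le, ← Real.rpow_natCast]
  push_cast [hn]
  rfl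

lemma vol_x (n : ℕ) [NeZero n] (α : ℝ) (l : ℝ) (h0 : 0 < l) (h1 : l ≤ 1) :
    volume (cuspDomain n α ∩ {z | z 0 < l}) =
      ENNReal.ofReal (l ^ (1 + α * (n - 1))) * volume (cuspDomain n α) := by
  have := Measure.addHaar_image_linearMap volume (dT n l (l ^ α)) (cuspDomain n α)
  rw [dT_det, det_pow n α l h0, abs_of_nonneg (by positivity)] at this
  rw [← this]
  congr 1
  have hla : 0 < l ^ α := by positivity
  ext z
  constructor
  · rintro ⟨⟨z1, z2, z3⟩, z4⟩
    have z4 : z 0 < l := z4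
    refine ⟨dT n l⁻¹ (l ^ α)⁻¹ z, ⟨?_, ?_, ?_⟩, ?_⟩
    · rw [dT_zero]; positivity
    · rw [dT_zero, inv_mul_lt_iff₀ h0]; linarith
    · rw [dT_zero, dT_radial _ _ _ (by positivity), inv_mul_lt_iff₀ hla,
        ← Real.mul_rpow h0.le (by positivity), mul_inv_cancel_left₀ h0.ne']
      exact z3
    · ext i
      rw [dT_apply, dT_apply]
      split_ifs
      · rw [mul_inv_cancel_left₀ h0.ne']
      · rw [mul_inv_cancel_left₀ hla.ne']
  · rintro ⟨z, ⟨z1, z2, z3⟩, rfl⟩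
    simp only [cuspDomain, mem_inter_iff, mem_ofPred_eq, dT_zero, dT_radial _ _ _ hla.le]
    refine ⟨⟨by positivity, by nlinarith, ?_⟩, by nlinarith⟩
    rw [Real.mul_rpow h0.le z1.le]
    gcongr

lemma rpow_sub_le {α x w : ℝ} (hα : 1 ≤ α) (hw : 0 ≤ w) (hwx : w ≤ x) (hx1 : x ≤ 1) :
    x ^ α - w ^ α ≤ α * (x - w) := by
  rcases (hw.trans hwx).eq_or_lt with h | hx
  · have : w = x := by linarith
    simp [this]
  have b := one_add_mul_self_le_rpow_one_add (s := w / x - 1) (by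
    have : 0 ≤ w / x := by positivity
    linarith) hα
  rw [add_sub_cancel, Real.div_rpow hw hx.le] at b
  have hxa : 0 < x ^ α := by positivity
  have hxa1 : x ^ α ≤ x := by
    simpa using Real.rpow_le_rpow_of_exponent_ge hx hx1 hα
  rw [le_div_iff₀ hxa] at b
  have e : (1 + α * (w / x - 1)) * x ^ α = x ^ α - α * (x - w) * (x ^ α / x) := by
    field_simp; ring
  rw [e] at b
  have q : x ^ α / x ≤ 1 := by rwa [div_le_one hx]
  have : 0 ≤ α * (x - w) := mul_nonneg (by linarith) (by linarith)
  nlinarith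

lemma cusp_infDist (n : ℕ) [NeZero n] (α : ℝ) (hα : 1 ≤ α) (z : EuclideanSpace ℝ (Fin n))
    (h0 : 0 < z 0) (h1 : z 0 < 1) (m : ℝ) (hm1 : m ≤ 1 - z 0)
    (hm2 : m ≤ z 0 ^ α - radial z) : m / (4 * (α + 1)) ≤ wr (cuspDomain n α) z := by
  have key : m / (α + 1) ≤ infDist z (cuspDomain n α)ᶜ := by
    rw [le_infDist (cusp_compl n α)]
    intro w hw
    rw [div_le_iff₀ (by linarith)]
    have c0 := coord_le_dist 0 z w
    have c1 := radial_le_add_dist z w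
    have hr := radial_nonneg z
    rw [abs_le] at c0
    have hd : 0 ≤ dist z w := dist_nonneg
    have hxa1 : z 0 ^ α ≤ z 0 := by
      simpa using Real.rpow_le_rpow_of_exponent_ge h0 h1.le hα
    by_cases w1 : w 0 ≤ 0
    · nlinarith
    push Not at w1
    by_cases w2 : 1 ≤ w 0
    · nlinarith
    push Not at w2
    have w3 : w 0 ^ α ≤ radial w := by
      by_contra h
      push Not at h
      exact hw ⟨w1, w2, h⟩
    rcases le_total (z 0) (w 0) with h | h
    · have : z 0 ^ α ≤ w 0 ^ α := Real.rpow_le_rpow h0.le h (by linarith)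
      nlinarith
    · have := rpow_sub_le hα w1.le h h1.le
      nlinarith
  unfold wr
  rw [mul_comm, ← div_div]
  linarith

lemma axis_chain (n : ℕ) [NeZero n] (α : ℝ) (hα : 1 < α) (η : ℝ) (hη : 0 < η) (hη1 : η < 1) :
    ∃ A : ℝ, 0 ≤ A ∧ ∀ (w : EuclideanSpace ℝ (Fin n) → ℝ) (D : ℝ), 0 ≤ D →
      ChainP (cuspDomain n α) w D → ∀ y, 0 < y → y ≤ 1 - η →
      |w (EuclideanSpace.single 0 y) - w (EuclideanSpace.single 0 (1 - η))| ≤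
        A * D * y ^ (1 - α) := by
  set κ : ℝ := η / (4 * (α + 1)) with hκ
  have hκ0 : 0 < κ := by positivity
  set B : ℝ := 1 / κ + 1 with hB
  have hB0 : 0 < B := by positivity
  have h2 : (2 : ℝ) ^ (1 - α) < 1 := Real.rpow_lt_one_of_one_lt_of_neg (by norm_num) (by linarith)
  have h20 : (0 : ℝ) < (2 : ℝ) ^ (1 - α) := by positivity
  set A : ℝ := B / (1 - 2 ^ (1 - α)) with hA
  have hA0 : 0 < A := div_pos hB0 (by linarith)
  have hAB : A * (1 - 2 ^ (1 - α)) = B := div_mul_cancel₀ _ (by linarith)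
  refine ⟨A, hA0.le, ?_⟩
  intro w D hD hw
  have step : ∀ y y', 0 < y → y ≤ y' → y' ≤ 2 * y → y' ≤ 1 - η →
      |w (EuclideanSpace.single 0 y) - w (EuclideanSpace.single 0 y')| ≤ B * D * y ^ (1 - α) := by
    intro y y' hy hyy' hy2 hy'
    have hpos : 0 < y ^ (1 - α) := by positivity
    have h1 : 1 ≤ y ^ (1 - α) :=
      Real.one_le_rpow_of_pos_of_le_one_of_nonpos hy (by linarith) (by linarith)
    have hN1 : 1 ≤ ⌈y ^ (1 - α) / κ⌉₊ := Nat.one_le_iff_ne_zero.2 (by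
      have : 0 < ⌈y ^ (1 - α) / κ⌉₊ := Nat.ceil_pos.2 (by positivity)
      omega)
    have hNle := Nat.le_ceil (y ^ (1 - α) / κ)
    have hNlt := (Nat.ceil_lt_add_one (a := y ^ (1 - α) / κ) (by positivity)).le
    have := chain_seg hw (fun t => EuclideanSpace.single 0 t) 1 (by
      intro t t'
      rw [EuclideanSpace.dist_single_same, Real.dist_eq, one_mul]) y y' (κ * y ^ α) hyy' _ hN1 (by
        intro t ht ht'
        refine ⟨ax_mem n α (by linarith) (by linarith), ?_⟩
        have hya : y ^ α ≤ t ^ α := Real.rpow_le_rpow hy.le ht (by linarith)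
        have hya1 : y ^ α ≤ 1 := Real.rpow_le_one hy.le (by linarith) (by linarith)
        have hya0 : 0 < y ^ α := by positivity
        have := cusp_infDist n α hα.le (EuclideanSpace.single 0 t) (by simp; linarith)
          (by simp; linarith) (η * y ^ α) (by simp; nlinarith)
          (by rw [radial_single]; simp; nlinarith)
        rw [hκ]
        refine le_trans (le_of_eq ?_) this
        ring) (by
          rw [div_le_iff₀ hκ0] at hNle
          have : y ^ (1 - α) * y ^ α = y := by
            rw [← Real.rpow_add hy]; simp
          have hya0 : 0 < y ^ α := by positivity
          nlinarith)
    refine this.trans ?_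
    calc (⌈y ^ (1 - α) / κ⌉₊ : ℝ) * D ≤ (y ^ (1 - α) / κ + 1) * D := by gcongr
      _ ≤ (y ^ (1 - α) / κ + y ^ (1 - α)) * D := by gcongr
      _ = _ := by rw [hB]; ring
  have main : ∀ k : ℕ, ∀ y, 0 < y → y ≤ 1 - η → 1 - η ≤ 2 ^ k * y →
      |w (EuclideanSpace.single 0 y) - w (EuclideanSpace.single 0 (1 - η))| ≤
        A * D * y ^ (1 - α) := by
    intro k
    induction k with
    | zero =>
      intro y hy h1 h2
      have : y = 1 - η := by linarith
      subst this
      simp only [sub_self, abs_zero]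
      positivity
    | succ k ih =>
      intro y hy h1 h2
      have hpos : 0 < y ^ (1 - α) := by positivity
      rcases le_total (2 * y) (1 - η) with h | h
      · have e1 := step y (2 * y) hy (by linarith) le_rfl h
        have e2 := ih (2 * y) (by linarith) h (by rw [pow_succ] at h2; linarith)
        rw [Real.mul_rpow (by norm_num) hy.le] at e2
        have : A * D * y ^ (1 - α) = B * D * y ^ (1 - α) + A * D * (2 ^ (1 - α) * y ^ (1 - α)) := by
          rw [← hAB]; ring
        rw [this]
        exact (abs_sub_le _ _ _).trans (add_le_add e1 e2)
      · have e1 := step y (1 - η) hy h1 h le_rfl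
        refine e1.trans ?_
        gcongr
        rw [← hAB]
        nlinarith
  intro y hy hy1
  obtain ⟨k, hk⟩ := pow_unbounded_of_one_lt (1 / y) (by norm_num : (1 : ℝ) < 2)
  refine main k y hy hy1 ?_
  rw [div_lt_iff₀ hy] at hk
  linarith

set_option maxHeartbeats 1000000 in
lemma lateral_chain (n : ℕ) [NeZero n] (α : ℝ) (hα : 1 < α) :
    ∃ N : ℕ, ∀ (w : EuclideanSpace ℝ (Fin n) → ℝ) (D : ℝ), 0 ≤ D →
      ChainP (cuspDomain n α) w D → ∀ z ∈ cuspDomain n α, ∀ j : ℕ, z 0 ≤ 1 - (1/2) ^ j →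
      radial z ≤ (1 - (1/2) ^ j) * z 0 ^ α →
      |w z - w (EuclideanSpace.single 0 (z 0 - 1 / (2 * α) * z 0 ^ α))| ≤
        (j + 1) * (N * D) := by
  set η : ℝ := 1 / (2 * α) with hη
  have hη0 : 0 < η := by positivity
  have hηα : η * α = 1 / 2 := by rw [hη]; field_simp
  have hη2 : η ≤ 1 / 2 := by nlinarith
  set κ : ℝ := η / 2 / (4 * (α + 1)) with hκ
  have hκ0 : 0 < κ := by positivity
  obtain ⟨N, hN⟩ := exists_nat_ge (2 / κ + 1)
  have hN1 : 1 ≤ N := by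
    have : (0 : ℝ) ≤ 2 / κ := by positivity
    have : (1 : ℝ) ≤ N := by linarith
    exact_mod_cast this
  refine ⟨N, ?_⟩
  rintro w D hD hw z ⟨z1, z2, z3⟩ j hj1 hj2
  set x := z 0 with hx
  set R := x ^ α with hR
  have hR0 : 0 < R := by positivity
  have hRx : R ≤ x := by
    simpa using Real.rpow_le_rpow_of_exponent_ge z1 z2.le hα.le
  set v : EuclideanSpace ℝ (Fin n) :=
    EuclideanSpace.single 0 (x - η * R) - z with hv
  set ε : ℝ := (1/2) ^ j with hε
  have hε0 : 0 < ε := by positivity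
  have hε1 : ε ≤ 1 := pow_le_one₀ (by norm_num) (by norm_num)
  have hr0 := radial_nonneg z
  have hz0 : ∀ t : ℝ, (z + t • v) 0 = x - t * (η * R) := by
    intro t; simp [hv, ← hx]; ring
  have hradv : ∀ t : ℝ, t ≤ 1 → radial (z + t • v) = (1 - t) * radial z := by
    intro t ht
    have : (1 - t) * radial z = radial ((1 - t) • z) := by
      rw [radial_smul, abs_of_nonneg (by linarith)]
    rw [this]
    unfold radial
    congr 1
    refine Finset.sum_congr rfl ?_
    intro i hi
    simp [hv, Finset.ne_of_mem_erase hi]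
    ring
  have hnv : ‖v‖ ≤ 2 * R := by
    refine (norm_le_radial v).trans ?_
    have a1 : v 0 = - (η * R) := by simp [hv, ← hx]
    have a2 : radial v = radial z := by
      have : radial z = radial ((-1 : ℝ) • z) := by rw [radial_smul]; simp
      rw [this]
      unfold radial
      congr 1
      refine Finset.sum_congr rfl ?_
      intro i hi
      simp [hv, Finset.ne_of_mem_erase hi]
    rw [a1, a2, abs_neg, abs_of_pos (by positivity)]
    nlinarith
  have key := chain_log hw (fun t => z + t • v) (2 * R) (by
    intro t t'
    have : (z + t • v) - (z + t' • v) = (t - t') • v := by module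
    rw [dist_eq_norm, this, norm_smul, Real.norm_eq_abs, mul_comm]
    gcongr) (κ * R) (by positivity) N hN1 j (by
      intro t ht0 ht1
      have hxt : x - t * (η * R) = x * (1 + -(t * (η * (R / x)))) := by field_simp; ring
      have hRx1 : R / x ≤ 1 := by rwa [div_le_one z1]
      have hRx0 : 0 < R / x := by positivity
      have hηt : η * t ≤ 1 / 2 := by nlinarith
      have hηRx : t * (η * (R / x)) ≤ η * t := by
        have : 0 ≤ η * t := by positivity
        nlinarith
      have bern := one_add_mul_self_le_rpow_one_add (s := -(t * (η * (R / x)))) (by linarith) hα.le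
      have b2 : 1 - t / 2 ≤ (1 + -(t * (η * (R / x)))) ^ α := by
        refine le_trans ?_ bern
        have : α * (t * (η * (R / x))) ≤ α * (η * t) := by gcongr
        have e : α * (η * t) = t / 2 := by
          calc α * (η * t) = (η * α) * t := by ring
            _ = t / 2 := by rw [hηα]; ring
        linarith
      have b3 : R * (1 - t / 2) ≤ (x - t * (η * R)) ^ α := by
        rw [hxt, Real.mul_rpow z1.le (by linarith)]
        gcongr
      have c1 : η / 2 * R * (t + ε) ≤ 1 - (x - t * (η * R)) := by
        have : η / 2 * R * ε ≤ ε := by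
          have : η / 2 * R ≤ 1 := by nlinarith
          nlinarith
        have : 0 ≤ η * R * t := by positivity
        nlinarith
      have c2 : η / 2 * R * (t + ε) ≤ (x - t * (η * R)) ^ α - (1 - t) * radial z := by
        have d1 : (1 - t) * radial z ≤ (1 - t) * ((1 - ε) * R) := by
          have : 0 ≤ 1 - t := by linarith
          gcongr
        have d2 : (t + ε) / 4 ≤ t / 2 + (1 - t) * ε := by
          nlinarith [mul_nonneg ht0 (sub_nonneg.2 hε1), mul_nonneg (sub_nonneg.2 ht1) hε0.le]
        have d3 : η / 2 * R * (t + ε) ≤ R * ((t + ε) / 4) := by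
          have : 0 ≤ R * (t + ε) := by positivity
          have h4 := mul_le_mul_of_nonneg_right hη2 this
          linarith
        have d4 : R * ((t + ε) / 4) ≤ R * (t / 2 + (1 - t) * ε) := by gcongr
        have d5 : R * (1 - t / 2) - (1 - t) * ((1 - ε) * R) = R * (t / 2 + (1 - t) * ε) := by ring
        linarith
      have hpos : 0 < η / 2 * R * (t + ε) := by positivity
      have p1 : 0 < x - t * (η * R) := by
        have : t * (η * R) = (η * t) * R := by ring
        nlinarith
      have p2 : x - t * (η * R) < 1 := by linarith
      refine ⟨⟨by rw [hz0]; exact p1, by rw [hz0]; exact p2, ?_⟩, ?_⟩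
      · rw [hz0, hradv t ht1]; linarith
      · have := cusp_infDist n α hα.le (z + t • v) (by rw [hz0]; exact p1) (by rw [hz0]; exact p2)
          (η / 2 * R * (t + ε)) (by rw [hz0]; exact c1) (by rw [hz0, hradv t ht1]; exact c2)
        refine le_trans (le_of_eq ?_) this
        rw [hκ]; ring) (by
          have : 2 / κ ≤ N := by linarith
          rw [div_le_iff₀ hκ0] at this
          nlinarith)
  simp only [zero_smul, add_zero, one_smul] at key
  have e : z + v = EuclideanSpace.single 0 (x - η * R) := by rw [hv]; abel
  rwa [e] at key

set_option maxHeartbeats 1000000 in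
theorem cusp_averaging (n : ℕ) [NeZero n] (α : ℝ) (hα : 1 < α) (s : ℝ) (hs : 1 ≤ s)
    (hcond : (α - 1) * s < 1 + α * (n - 1)) : IsLsAveragingDomain s (cuspDomain n α) := by
  have hn : 1 ≤ n := Nat.one_le_iff_ne_zero.2 (NeZero.ne n)
  have hn' : (1 : ℝ) ≤ n := by exact_mod_cast hn
  have hs0 : 0 < s := by linarith
  have hα0 : 0 ≤ α := by linarith
  set Ω := cuspDomain n α with hΩ
  have ho := cusp_open n α hα0
  have ht := cusp_vol_top n α hα0
  set p : ℝ := 1 + α * (n - 1) with hp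
  have hp1 : 1 ≤ p := by
    have : 0 ≤ α * ((n : ℝ) - 1) := mul_nonneg hα0 (by linarith)
    linarith
  obtain ⟨V, hV, hVe⟩ : ∃ V : ℝ, 0 ≤ V ∧ volume Ω = ENNReal.ofReal V :=
    ⟨_, ENNReal.toReal_nonneg, (ENNReal.ofReal_toReal ht).symm⟩
  have hc0 : Continuous fun z : EuclideanSpace ℝ (Fin n) => z 0 := by fun_prop
  -- lateral sets
  have hε0 : ∀ j : ℕ, (0 : ℝ) < (1/2) ^ j := fun j => by positivity
  have hε1 : ∀ j : ℕ, ((1 : ℝ)/2) ^ j ≤ 1 := fun j => pow_le_one₀ (by norm_num) (by norm_num)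
  let SA : ℕ → Set (EuclideanSpace ℝ (Fin n)) := fun j =>
    {z | radial z ≤ (1 - (1/2) ^ j) * z 0 ^ α}
  let SB : ℕ → Set (EuclideanSpace ℝ (Fin n)) := fun j => {z | z 0 < 1 - (1/2) ^ j}
  have hSA : ∀ j, MeasurableSet (SA j) := fun j =>
    (isClosed_le radial_continuous (continuous_const.mul
      (hc0.rpow_const fun _ => Or.inr hα0))).measurableSet
  have hSB : ∀ j, MeasurableSet (SB j) := fun j =>
    (isOpen_lt hc0 continuous_const).measurableSet
  have diffle : ∀ (S : Set (EuclideanSpace ℝ (Fin n))) (c : ℝ), MeasurableSet S → 0 ≤ c →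
      ENNReal.ofReal c * volume Ω ≤ volume (Ω ∩ S) →
      volume (Ω \ S) ≤ ENNReal.ofReal ((1 - c) * V) := by
    intro S c hS hc h
    rw [← sdiff_inter_self_eq_sdiff, inter_comm, measure_sdiff inter_subset_left
      (ho.measurableSet.inter hS).nullMeasurableSet
      (ne_top_of_le_ne_top ht (measure_mono inter_subset_left))]
    refine (tsub_le_tsub_left h _).trans ?_
    rw [hVe, ← ENNReal.ofReal_mul hc, ← ENNReal.ofReal_sub _ (by positivity)]
    refine ENNReal.ofReal_le_ofReal (by linarith)
  have hvA : ∀ j, volume (Ω \ SA j) ≤ ENNReal.ofReal (n * V * (1/2) ^ j) := by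
    intro j
    refine (diffle _ _ (hSA j) ?_ (vol_lateral n α (1 - (1/2) ^ j) ?_ ?_)).trans ?_
    · exact pow_nonneg (by linarith [hε1 j]) _
    · linarith [hε1 j]
    · linarith [hε0 j]
    refine ENNReal.ofReal_le_ofReal ?_
    have b := one_add_mul_le_pow (a := -((1 : ℝ)/2) ^ j) (by linarith [hε1 j]) (n - 1)
    rw [← sub_eq_add_neg] at b
    push_cast [hn] at b
    have : 1 - (1 - ((1 : ℝ)/2) ^ j) ^ (n - 1) ≤ n * (1/2) ^ j := by nlinarith [hε0 j]
    nlinarith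
  have hvB : ∀ j, volume (Ω \ SB j) ≤ ENNReal.ofReal (p * V * (1/2) ^ j) := by
    intro j
    by_cases hj : j = 0
    · refine (measure_mono sdiff_subset).trans ?_
      rw [hVe, hj]
      refine ENNReal.ofReal_le_ofReal ?_
      nlinarith
    have hlt : ((1 : ℝ)/2) ^ j < 1 := pow_lt_one₀ (by norm_num) (by norm_num) hj
    refine (diffle _ _ (hSB j) ?_ (vol_x n α (1 - (1/2) ^ j) ?_ ?_).ge).trans ?_
    · exact Real.rpow_nonneg (by linarith) _
    · linarith
    · linarith [hε0 j]
    refine ENNReal.ofReal_le_ofReal ?_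
    have b := one_add_mul_self_le_rpow_one_add (s := -((1 : ℝ)/2) ^ j) (by linarith) hp1
    rw [← sub_eq_add_neg] at b
    nlinarith
  obtain ⟨G1, hG1m, hG1t, hG1⟩ := log_G volume Ω ho.measurableSet ht (fun j => SA j ∩ SB j)
    (fun j => (hSA j).inter (hSB j)) (by
      rintro z ⟨z1, z2, z3⟩
      have htend : Filter.Tendsto (fun j : ℕ => 1 - (1/2 : ℝ) ^ j) Filter.atTop
          (nhds (1 - 0)) :=
        tendsto_const_nhds.sub (tendsto_pow_atTop_nhds_zero_of_lt_one (by norm_num) (by norm_num))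
      rw [sub_zero] at htend
      have hxa : 0 < z 0 ^ α := by positivity
      have h3 : radial z / z 0 ^ α < 1 := by rwa [div_lt_one hxa]
      obtain ⟨j, ha, hb⟩ := ((htend.eventually (lt_mem_nhds z2)).and
        (htend.eventually (lt_mem_nhds h3))).exists
      refine ⟨j, ?_, ha⟩
      rw [div_lt_iff₀ hxa] at hb
      exact hb.le) s hs ((n + p) * V) (by positivity) (by
        intro j
        rw [sdiff_inter]
        refine (measure_union_le _ _).trans ((add_le_add (hvA j) (hvB j)).trans ?_)
        rw [← ENNReal.ofReal_add (by positivity) (by positivity)]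
        refine ENNReal.ofReal_le_ofReal (by linarith))
  -- axis sets
  set b : ℝ := 2 ^ (α - 1) with hb
  have hb0 : 0 < b := by positivity
  let SX : ℕ → Set (EuclideanSpace ℝ (Fin n)) := fun k => {z | (1/2) ^ k ≤ z 0}
  have hSX : ∀ k, MeasurableSet (SX k) := fun j =>
    (isClosed_le continuous_const hc0).measurableSet
  have hvX : ∀ k, volume (Ω \ SX k) = ENNReal.ofReal (((1/2 : ℝ) ^ p) ^ k * V) := by
    intro k
    have : Ω \ SX k = Ω ∩ {z | z 0 < (1/2) ^ k} := by
      ext z; simp [SX]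
    rw [this, vol_x n α _ (hε0 k) (hε1 k), ← hΩ, hVe, ← ENNReal.ofReal_mul (by positivity)]
    congr 2
    rw [← Real.rpow_natCast, ← Real.rpow_natCast, ← Real.rpow_mul (by norm_num),
      ← Real.rpow_mul (by norm_num), mul_comm]
  obtain ⟨G2, hG2m, hG2t, hG2⟩ := exists_G volume Ω ho.measurableSet ht SX hSX (by
      rintro z ⟨z1, z2, z3⟩
      obtain ⟨k, hk⟩ := exists_pow_lt_of_lt_one z1 (by norm_num : (1/2 : ℝ) < 1)
      exact ⟨k, hk.le⟩) (fun k => ENNReal.ofReal (b ^ k) ^ s)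
      (ENNReal.rpow_ne_top_of_nonneg hs0.le ENNReal.ofReal_ne_top) (by
      have hq : b ^ s * (1/2 : ℝ) ^ p < 1 := by
        rw [hb, one_div, Real.inv_rpow (by norm_num), ← Real.rpow_neg (by norm_num),
          ← Real.rpow_mul (by norm_num), ← Real.rpow_add (by norm_num)]
        exact Real.rpow_lt_one_of_one_lt_of_neg (by norm_num) (by linarith)
      have hsum : Summable fun k : ℕ => b ^ s * V * (b ^ s * (1/2 : ℝ) ^ p) ^ k :=
        (summable_geometric_of_lt_one (by positivity) hq).mul_left _
      refine ne_top_of_le_ne_top hsum.tsum_ofReal_ne_top (ENNReal.tsum_le_tsum ?_)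
      intro k
      rw [hvX, ENNReal.ofReal_rpow_of_nonneg (by positivity) hs0.le,
        ← ENNReal.ofReal_mul (by positivity)]
      refine ENNReal.ofReal_le_ofReal (le_of_eq ?_)
      have : (b ^ (k + 1)) ^ s = (b ^ s) ^ (k + 1) := by
        rw [← Real.rpow_natCast, ← Real.rpow_natCast, ← Real.rpow_mul hb0.le,
          ← Real.rpow_mul hb0.le, mul_comm]
      rw [this, mul_pow, pow_succ]
      ring)
  set η : ℝ := 1 / (2 * α) with hη
  have hη0 : 0 < η := by positivity
  have hηα : η * α = 1 / 2 := by rw [hη]; field_simp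
  have hη2 : η ≤ 1 / 2 := by nlinarith
  obtain ⟨N, hN⟩ := lateral_chain n α hα
  obtain ⟨A, hA0, hA⟩ := axis_chain n α hα η hη0 (by linarith)
  refine averaging_of_chain ho (cusp_compl n α) (cusp_vol_pos n α hα0) ht s hs
    (EuclideanSpace.single 0 (1 - η))
    (fun z => 2 ^ (s-1) * (ENNReal.ofReal N ^ s * G1 z + ENNReal.ofReal (A * b) ^ s * G2 z)) ?_ ?_
  · have e3 : (2 : ℝ≥0∞) ^ (s-1) ≠ ⊤ := ENNReal.rpow_ne_top_of_nonneg (by linarith) (by simp)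
    have e1 : ENNReal.ofReal N ^ s ≠ ⊤ := ENNReal.rpow_ne_top_of_nonneg hs0.le ENNReal.ofReal_ne_top
    have e2 : ENNReal.ofReal (A * b) ^ s ≠ ⊤ :=
      ENNReal.rpow_ne_top_of_nonneg hs0.le ENNReal.ofReal_ne_top
    rw [lintegral_const_mul' _ _ e3, lintegral_add_left (hG1m.const_mul _),
      lintegral_const_mul' _ _ e1, lintegral_const_mul' _ _ e2]
    finiteness
  intro w D hD hw z hz
  obtain ⟨j, ⟨hja, hjb⟩, hjG⟩ := hG1 z hz
  obtain ⟨k, hk, hkG⟩ := hG2 z hz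
  have k1 := hN w D hD hw z hz j (le_of_lt hjb) hja
  obtain ⟨z1, z2, z3⟩ := hz
  set x := z 0 with hx
  have hxa : x ^ α ≤ x := by
    simpa using Real.rpow_le_rpow_of_exponent_ge z1 z2.le hα.le
  have hxa0 : 0 < x ^ α := by positivity
  have hy2 : x / 2 ≤ x - η * x ^ α := by nlinarith
  have hy1 : x - η * x ^ α ≤ 1 - η := by
    have := rpow_sub_le hα.le z1.le z2.le le_rfl
    rw [Real.one_rpow] at this
    nlinarith
  have k2 := hA w D hD hw (x - η * x ^ α) (by linarith) hy1
  have hyp : (x - η * x ^ α) ^ (1 - α) ≤ b * b ^ k := by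
    have hk' : (1/2 : ℝ) ^ (k + 1) ≤ x - η * x ^ α := by
      have : (1/2 : ℝ) ^ k ≤ x := hk
      rw [pow_succ]; linarith
    refine (Real.rpow_le_rpow_of_nonpos (hε0 _) hk' (by linarith)).trans (le_of_eq ?_)
    rw [← pow_succ', hb, ← Real.rpow_natCast, ← Real.rpow_natCast, ← Real.rpow_mul (by norm_num),
      ← Real.rpow_mul (by norm_num), one_div, Real.inv_rpow (by norm_num),
      ← Real.rpow_neg (by norm_num)]
    congr 1
    ring
  have k3 : |w z - w (EuclideanSpace.single 0 (1 - η))| ≤ D * (N * (j + 1)) + D * (A * b * b ^ k) := by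
    refine (abs_sub_le _ _ _).trans (add_le_add (k1.trans (le_of_eq (by ring))) (k2.trans ?_))
    calc A * D * (x - η * x ^ α) ^ (1 - α) ≤ A * D * (b * b ^ k) := by gcongr
      _ = _ := by ring
  calc ‖w z - w (EuclideanSpace.single 0 (1 - η))‖ₑ ^ s
      ≤ (ENNReal.ofReal (D * (N * (j + 1))) + ENNReal.ofReal (D * (A * b * b ^ k))) ^ s := by
        gcongr
        rw [← ofReal_norm, Real.norm_eq_abs, ← ENNReal.ofReal_add (by positivity) (by positivity)]
        exact ENNReal.ofReal_le_ofReal k3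
    _ ≤ 2 ^ (s-1) * (ENNReal.ofReal (D * (N * (j + 1))) ^ s +
          ENNReal.ofReal (D * (A * b * b ^ k)) ^ s) := ENNReal.rpow_add_le_mul_rpow_add_rpow _ _ hs
    _ = ENNReal.ofReal D ^ s * (2 ^ (s-1) * (ENNReal.ofReal N ^ s * ENNReal.ofReal (j + 1) ^ s +
          ENNReal.ofReal (A * b) ^ s * ENNReal.ofReal (b ^ k) ^ s)) := by
        rw [ENNReal.ofReal_mul hD, ENNReal.ofReal_mul hD, ENNReal.ofReal_mul (p := (N : ℝ)) (by positivity),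
          ENNReal.ofReal_mul (p := A * b) (by positivity)]
        simp only [ENNReal.mul_rpow_of_nonneg _ _ hs0.le]
        ring
    _ ≤ _ := by gcongr

lemma ball_geom (n : ℕ) [NeZero n] (hn : 2 ≤ n) (α : ℝ) (hα : 1 < α)
    (a : EuclideanSpace ℝ (Fin n)) (ρ : ℝ) (hρ : 0 < ρ) (hb : ball a ρ ⊆ cuspDomain n α) :
    ρ ≤ 4 / 5 * a 0 ∧ ρ ≤ 2 * a 0 ^ α := by
  obtain ⟨i, hi⟩ : ∃ i : Fin n, i ≠ 0 := by
    have : Nontrivial (Fin n) := Fin.nontrivial_iff_two_le.2 hn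
    exact exists_ne 0
  obtain ⟨d, hd, hda⟩ : ∃ d : ℝ, d ^ 2 = (18 / 25 * ρ) ^ 2 ∧ 18 / 25 * ρ ≤ |a i + d| := by
    rcases le_total 0 (a i) with h | h
    · exact ⟨18 / 25 * ρ, rfl, by rw [abs_of_nonneg (by positivity)]; linarith⟩
    · refine ⟨-(18 / 25 * ρ), by ring, ?_⟩
      rw [abs_of_nonpos (by linarith)]; linarith
  set w : EuclideanSpace ℝ (Fin n) :=
    EuclideanSpace.single 0 (-(27 / 50 * ρ)) + EuclideanSpace.single i d with hw
  have hwn : ‖w‖ < ρ := by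
    have h1 : ‖w‖ ^ 2 = (9 / 10 * ρ) ^ 2 := by
      rw [hw, norm_add_sq_real, EuclideanSpace.inner_single_left]
      simp only [PiLp.norm_single, Real.norm_eq_abs, sq_abs, hd]
      simp [hi.symm]
      ring
    rw [pow_left_inj₀ (norm_nonneg _) (by positivity) (by norm_num)] at h1
    linarith
  have ha : a ∈ cuspDomain n α := hb (mem_ball_self hρ)
  have hq : a + w ∈ cuspDomain n α := hb (by rw [mem_ball, dist_eq_norm, add_sub_cancel_left]; exact hwn)
  obtain ⟨q1, q2, q3⟩ := hq
  have e0 : (a + w) 0 = a 0 - 27 / 50 * ρ := by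
    simp [hw, hi.symm]; ring
  have ei : (a + w) i = a i + d := by simp [hw, hi]
  have hr : |a i + d| ≤ radial (a + w) := by
    rw [← ei]
    refine Real.abs_le_sqrt ?_
    exact Finset.single_le_sum (f := fun j => (a + w) j ^ 2) (fun j _ => sq_nonneg _)
      (Finset.mem_erase.2 ⟨hi, Finset.mem_univ _⟩)
  have h1 : (a + w) 0 ^ α ≤ (a + w) 0 := by
    simpa using Real.rpow_le_rpow_of_exponent_ge q1 q2.le hα.le
  have h2 : (a + w) 0 ^ α ≤ a 0 ^ α := Real.rpow_le_rpow q1.le (by rw [e0]; linarith) (by linarith)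
  constructor <;> linarith

lemma osc_bound (n : ℕ) [NeZero n] (hn : 2 ≤ n) (α : ℝ) (hα : 1 < α)
    (a : EuclideanSpace ℝ (Fin n)) (ρ : ℝ) (hρ : 0 < ρ) (hb : ball a ρ ⊆ cuspDomain n α)
    (z : EuclideanSpace ℝ (Fin n)) (hz : z ∈ ball a ρ) :
    ‖z 0 ^ (1 - α) - a 0 ^ (1 - α)‖ ≤ 2 * (α - 1) * 5 ^ α := by
  obtain ⟨g1, g2⟩ := ball_geom n hn α hα a ρ hρ hb
  have ha : 0 < a 0 := (hb (mem_ball_self hρ)).1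
  have hza : |z 0 - a 0| ≤ ρ := (coord_le_dist 0 z a).trans (le_of_lt hz)
  have hz0 : a 0 / 5 ≤ z 0 := by linarith [(abs_le.1 hza).1]
  have := Convex.norm_image_sub_le_of_norm_hasDerivWithin_le (f := fun x : ℝ => x ^ (1 - α))
    (f' := fun x => (1 - α) * x ^ (1 - α - 1)) (s := Ici (a 0 / 5))
    (C := (α - 1) * (a 0 / 5) ^ (-α)) (x := a 0) (y := z 0) (by
      intro x hx
      have hx0 : 0 < x := lt_of_lt_of_le (by positivity) (mem_Ici.1 hx)
      exact (Real.hasDerivAt_rpow_const (Or.inl hx0.ne')).hasDerivWithinAt) (by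
      intro x hx
      have hx0 : 0 < x := lt_of_lt_of_le (by positivity) (mem_Ici.1 hx)
      rw [norm_mul, Real.norm_eq_abs, Real.norm_eq_abs, abs_of_neg (by linarith),
        abs_of_pos (by positivity), show 1 - α - 1 = -α by ring, neg_sub]
      have : 0 ≤ α - 1 := by linarith
      gcongr ?_ * ?_
      exact Real.rpow_le_rpow_of_nonpos (by positivity) hx (by linarith)) (convex_Ici _)
      (mem_Ici.2 (by linarith)) (mem_Ici.2 hz0)
  refine this.trans ?_
  have h1 : ‖z 0 - a 0‖ ≤ 2 * a 0 ^ α := by rw [Real.norm_eq_abs]; linarith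
  have h0 : 0 ≤ α - 1 := by linarith
  calc (α - 1) * (a 0 / 5) ^ (-α) * ‖z 0 - a 0‖
      ≤ (α - 1) * (a 0 / 5) ^ (-α) * (2 * a 0 ^ α) := by gcongr
    _ = 2 * (α - 1) * 5 ^ α := by
      rw [Real.div_rpow ha.le (by norm_num), Real.rpow_neg ha.le, Real.rpow_neg (by norm_num)]
      have : a 0 ^ α ≠ 0 := by positivity
      have : (5 : ℝ) ^ α ≠ 0 := by positivity
      field_simp

theorem cusp_not_averaging (n : ℕ) [NeZero n] (hn : 2 ≤ n) (α : ℝ) (hα : 1 < α) (s : ℝ)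
    (hs : 1 ≤ s) (hcond : 1 + α * (n - 1) ≤ (α - 1) * s) :
    ¬ IsLsAveragingDomain s (cuspDomain n α) := by
  rintro ⟨C, hC, h⟩
  have hs0 : 0 < s := by linarith
  have hα0 : 0 ≤ α := by linarith
  set Ω := cuspDomain n α with hΩ
  have ho : IsOpen Ω := cusp_open n α hα0
  have ht : volume Ω ≠ ⊤ := cusp_vol_top n α hα0
  have h0 : volume Ω ≠ 0 := cusp_vol_pos n α hα0
  let u : EuclideanSpace ℝ (Fin n) → ℝ := fun z => z 0 ^ (1 - α)
  have hc0 : Continuous fun z : EuclideanSpace ℝ (Fin n) => z 0 := by fun_prop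
  have hcont : ContinuousOn u Ω := hc0.continuousOn.rpow_const fun z hz => Or.inl hz.1.ne'
  have hmeas : Measurable u := hc0.measurable.pow_const _
  have hu : LocallyIntegrableOn u Ω volume := hcont.locallyIntegrableOn ho.measurableSet
  have hsup : (⨆ (x : EuclideanSpace ℝ (Fin n)) (ρ : ℝ) (_ : 0 < ρ ∧ ball x ρ ⊆ Ω),
      (lsAvgE s u (ball x ρ)) ^ (1/s)) ≤ 2 * ENNReal.ofReal (2 * (α - 1) * 5 ^ α) := by
    refine iSup_le fun a => iSup_le fun ρ => iSup_le fun hb => ?_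
    have hp := nm_prob (vol_ball_pos a hb.1) (measure_ball_lt_top (μ := volume)).ne
    rw [lsAvgE_rpow s hs, avg_eq_nm]
    refine (eLpNorm_sub_mean_le _ s hs u (u a) hmeas.aestronglyMeasurable).trans ?_
    gcongr
    refine (eLpNorm_le_of_ae_bound (C := 2 * (α - 1) * 5 ^ α) ?_).trans ?_
    · rw [nm]
      refine Measure.ae_smul_measure ?_ _
      refine (ae_restrict_iff' measurableSet_ball).2 (Filter.Eventually.of_forall ?_)
      intro z hz
      exact osc_bound n hn α hα a ρ hb.1 hb.2 z hz
    · simp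
  have hfin : (lsAvgE s u Ω) ^ (1/s) ≠ ⊤ := by
    refine ne_top_of_le_ne_top ?_ ((h u hu).trans (mul_le_mul_right hsup C))
    finiteness
  rw [lsAvgE_rpow s hs] at hfin
  have hp := nm_prob h0 ht
  have hmem := memLp_of_sub _ _ u _ hmeas.aestronglyMeasurable hfin
  have h1 := hmem.2.ne
  rw [eLpNorm_rpow' _ s hs, lintegral_nm] at h1
  have h2 : ∫⁻ z in Ω, ‖u z‖ₑ ^ s ≠ ⊤ := by
    intro h2
    rw [h2, ENNReal.mul_top (by simpa using ht), ENNReal.top_rpow_of_pos (by positivity)] at h1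
    exact h1 rfl
  let S : ℕ → Set (EuclideanSpace ℝ (Fin n)) := fun k => {z | z 0 < (1/2) ^ k}
  have hSm : ∀ k, MeasurableSet (S k) := fun k => (isOpen_lt hc0 continuous_const).measurableSet
  have hε0 : ∀ j : ℕ, (0 : ℝ) < (1/2) ^ j := fun j => by positivity
  have hε1 : ∀ j : ℕ, ((1 : ℝ)/2) ^ j ≤ 1 := fun j => pow_le_one₀ (by norm_num) (by norm_num)
  have hvol : ∀ k, volume (Ω ∩ S k) =
      ENNReal.ofReal (((1/2 : ℝ) ^ k) ^ (1 + α * (n - 1))) * volume Ω :=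
    fun k => vol_x n α _ (hε0 k) (hε1 k)
  have hp0 : 0 < 1 + α * ((n : ℝ) - 1) := by
    have : (2 : ℝ) ≤ n := by exact_mod_cast hn
    have : 0 ≤ α * ((n : ℝ) - 1) := mul_nonneg hα0 (by linarith)
    linarith
  have htend : Filter.Tendsto ((volume.restrict Ω) ∘ S) Filter.atTop (nhds 0) := by
    have e : ((volume.restrict Ω) ∘ S) = fun k =>
        ENNReal.ofReal (((1/2 : ℝ) ^ k) ^ (1 + α * (n - 1))) * volume Ω := by
      funext k
      rw [Function.comp, Measure.restrict_apply (hSm k), inter_comm, hvol]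
    rw [e]
    have t1 : Filter.Tendsto (fun k : ℕ => ((1/2 : ℝ) ^ k) ^ (1 + α * ((n : ℝ) - 1))) Filter.atTop
        (nhds 0) := by
      have := (tendsto_pow_atTop_nhds_zero_of_lt_one (r := (1/2 : ℝ)) (by norm_num)
        (by norm_num)).rpow_const (p := 1 + α * ((n : ℝ) - 1)) (Or.inr hp0.le)
      rwa [Real.zero_rpow hp0.ne'] at this
    have t2 := ENNReal.Tendsto.mul_const (b := volume Ω) (ENNReal.tendsto_ofReal t1) (Or.inr ht)
    simpa using t2
  have hlim := tendsto_setLIntegral_zero h2 htend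
  have hge : ∀ k, volume Ω ≤ ∫⁻ z in S k, ‖u z‖ₑ ^ s ∂(volume.restrict Ω) := by
    intro k
    rw [Measure.restrict_restrict (hSm k), inter_comm]
    set l : ℝ := (1/2) ^ k with hl
    have hl0 : 0 < l := hε0 k
    calc volume Ω ≤ ENNReal.ofReal ((l ^ (1 - α)) ^ s) * volume (Ω ∩ S k) := by
          rw [hvol, ← mul_assoc, ← ENNReal.ofReal_mul (by positivity), ← Real.rpow_mul hl0.le,
            ← Real.rpow_add hl0]
          have : (1 : ℝ) ≤ l ^ ((1 - α) * s + (1 + α * (n - 1))) :=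
            Real.one_le_rpow_of_pos_of_le_one_of_nonpos hl0 (hε1 k) (by linarith)
          calc volume Ω = ENNReal.ofReal 1 * volume Ω := by simp
            _ ≤ _ := by gcongr
      _ = ∫⁻ z in Ω ∩ S k, ENNReal.ofReal ((l ^ (1 - α)) ^ s) := by simp
      _ ≤ _ := by
        refine setLIntegral_mono' (ho.measurableSet.inter (hSm k)) ?_
        rintro z ⟨hz, hzS⟩
        rw [← ofReal_abs_rpow s hs]
        refine ENNReal.ofReal_le_ofReal ?_
        gcongr
        refine le_trans ?_ (le_abs_self _)
        exact Real.rpow_le_rpow_of_nonpos hz.1 (le_of_lt hzS) (by linarith)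
  have := ge_of_tendsto' hlim hge
  exact h0 (le_antisymm this bot_le)

/-- The cusp domain `Ω_α` is `L^s`-averaging iff
`(α − 1)(s − n + 1) < n`. -/
theorem cusp_LsAveraging_iff (n : ℕ) [NeZero n] (hn : 2 ≤ n) (α : ℝ) (hα : 0 ≤ α)
    (s : ℝ) (hs : 1 ≤ s) :
    IsLsAveragingDomain s (cuspDomain n α) ↔ (α - 1) * (s - n + 1) < n := by
  have hn' : (2 : ℝ) ≤ n := by exact_mod_cast hn
  rcases le_or_gt α 1 with h1 | h1
  · refine iff_of_true ?_ ?_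
    · exact averaging_of_convex (cusp_open n α hα) (cusp_compl n α)
        ⟨_, ax_mem n α (y := 1/2) (by norm_num) (by norm_num)⟩ (cusp_vol_top n α hα)
        (cusp_convex n α hα h1) (cusp_bdd n α hα) s hs
    · nlinarith [mul_nonneg (sub_nonneg.2 h1) (by linarith : (0:ℝ) ≤ s),
        mul_nonneg hα (by linarith : (0:ℝ) ≤ (n : ℝ) - 1)]
  · constructor
    · intro h
      by_contra hc
      refine cusp_not_averaging n hn α h1 s hs ?_ h
      nlinarith
    · intro h
      exact cusp_averaging n α h1 s hs (by nlinarith)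
end
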